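/- arXiv:1605.06010 — 6 statements merged into one kernel-verified Lean document; each statement's English description precedes it below -/
import Mathlib

section
/- Let (X, T) be a dynamical system and let C be a nonempty closed subset of 𝔽₀(X) with T_F(C) ⊆ C. If the restricted system (C, T_F|_C) is topologically transitive, then all elements of C have the same maximum value: for any A, B ∈ C, max{A(x) : x ∈ X} = max{B(x) : x ∈ X}; equivalently, there exists λ ∈ [0,1] with C ⊆ 𝔽^{=λ}(X). -/
open Metric Set TopologicalSpace Filter Function
open scoped Classical

variable {X Y : Type*}

/-- Extended Hausdorff metric on subsets of `X`: the usual Hausdorff distance between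
two nonempty sets (or two empty sets), and `diam X` when exactly one of them is empty. -/
noncomputable def eHd (X : Type*) [MetricSpace X] (A B : Set X) : ℝ :=
  if (A.Nonempty ∧ B.Nonempty) ∨ (A = ∅ ∧ B = ∅) then Metric.hausdorffDist A B
  else Metric.diam (Set.univ : Set X)

/-- The `α`-cut of a fuzzy set. -/
def cut (A : X → ℝ) (α : ℝ) : Set X := {x | α ≤ A x}

/-- The levelwise metric `d_∞` on fuzzy sets. -/
noncomputable def dinf [MetricSpace X] (A B : X → ℝ) : ℝ :=
  sSup {r : ℝ | ∃ α ∈ Set.Ioc (0:ℝ) 1, r = eHd X (cut A α) (cut B α)}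

/-- A fuzzy set: an upper semicontinuous function into `[0,1]`. -/
def IsFuzzy [TopologicalSpace X] (A : X → ℝ) : Prop :=
  (∀ x, A x ∈ Set.Icc (0:ℝ) 1) ∧ UpperSemicontinuous A

/-- `𝔽₀(X)`: nonempty (not identically zero) u.s.c. fuzzy sets. -/
def F0 (X : Type*) [TopologicalSpace X] : Set (X → ℝ) :=
  {A | IsFuzzy A ∧ ∃ x, A x ≠ 0}

/-- `𝔽^{=λ}(X)`: u.s.c. fuzzy sets with maximum value `λ`. -/
def Feq (X : Type*) [TopologicalSpace X] (lam : ℝ) : Set (X → ℝ) :=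
  {A | IsFuzzy A ∧ (∃ x, A x = lam) ∧ ∀ x, A x ≤ lam}

/-- `𝔽^{≥λ}(X)`: u.s.c. fuzzy sets attaining a value `≥ λ`. -/
def Fge (X : Type*) [TopologicalSpace X] (lam : ℝ) : Set (X → ℝ) :=
  {A | IsFuzzy A ∧ ∃ x, lam ≤ A x}

/-- Zadeh's extension of `T`. -/
noncomputable def zadeh (T : X → X) (A : X → ℝ) : X → ℝ :=
  fun x => sSup (A '' (T ⁻¹' {x}))

/-- The induced map `T_K` on the hyperspace of nonempty closed (= compact) subsets. -/
def hyper [TopologicalSpace X] (T : X → X) (hT : Continuous T)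
    (A : NonemptyCompacts X) : NonemptyCompacts X :=
  ⟨⟨T '' A, A.isCompact.image hT⟩, A.nonempty.image T⟩

/-- Topological transitivity. -/
def TopTrans [TopologicalSpace Y] (S : Y → Y) : Prop :=
  ∀ U V : Set Y, IsOpen U → IsOpen V → U.Nonempty → V.Nonempty →
    ∃ n : ℕ, (S^[n] '' U ∩ V).Nonempty

/-- Weak mixing: `S × S` is transitive. -/
def TopWeakMix [TopologicalSpace Y] (S : Y → Y) : Prop :=
  TopTrans (fun p : Y × Y => (S p.1, S p.2))

/-- Topological transitivity of `S` restricted to `C`, for the topology induced by the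
(pseudo)metric `ρ`, phrased via metric balls. -/
def TransOn (ρ : Y → Y → ℝ) (S : Y → Y) (C : Set Y) : Prop :=
  ∀ A ∈ C, ∀ B ∈ C, ∀ ε > 0, ∃ n : ℕ, ∃ E ∈ C, ρ E A < ε ∧ ρ (S^[n] E) B < ε

/-- Weak mixing of `S` restricted to `C`, phrased via metric balls. -/
def WeakMixOn (ρ : Y → Y → ℝ) (S : Y → Y) (C : Set Y) : Prop :=
  ∀ A₁ ∈ C, ∀ A₂ ∈ C, ∀ B₁ ∈ C, ∀ B₂ ∈ C, ∀ ε > 0, ∃ n : ℕ,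
    ∃ E₁ ∈ C, ∃ E₂ ∈ C, ρ E₁ A₁ < ε ∧ ρ E₂ A₂ < ε ∧
      ρ (S^[n] E₁) B₁ < ε ∧ ρ (S^[n] E₂) B₂ < ε

lemma fz_max [MetricSpace X] [CompactSpace X] [Nonempty X] {A : X → ℝ} (hA : IsFuzzy A) :
    ∃ x, A x = sSup (Set.range A) ∧ ∀ y, A y ≤ sSup (Set.range A) := by
  obtain ⟨x, -, hx⟩ := (hA.2.upperSemicontinuousOn univ).exists_isMaxOn univ_nonempty isCompact_univ
  have h : IsGreatest (Set.range A) (A x) := by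
    refine ⟨⟨x, rfl⟩, ?_⟩
    rintro _ ⟨y, rfl⟩
    exact hx (mem_univ y)
  refine ⟨x, h.csSup_eq.symm, fun y => ?_⟩
  rw [h.csSup_eq]
  exact h.2 ⟨y, rfl⟩

lemma fz_eHd_le [MetricSpace X] [CompactSpace X] (A B : Set X) :
    eHd X A B ≤ Metric.diam (Set.univ : Set X) := by
  have hb : Bornology.IsBounded (Set.univ : Set X) := isCompact_univ.isBounded
  unfold eHd
  split_ifs with h
  · rcases h with ⟨⟨a, ha⟩, ⟨b, hb'⟩⟩ | ⟨h1, h2⟩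
    · refine Metric.hausdorffDist_le_of_mem_dist Metric.diam_nonneg ?_ ?_
      · intro x _
        exact ⟨b, hb', Metric.dist_le_diam_of_mem hb trivial trivial⟩
      · intro x _
        exact ⟨a, ha, Metric.dist_le_diam_of_mem hb trivial trivial⟩
    · subst h1 h2
      simpa using Metric.diam_nonneg
  · exact le_rfl

lemma fz_eHd_symm [MetricSpace X] (A B : Set X) : eHd X A B = eHd X B A := by
  unfold eHd
  rw [Metric.hausdorffDist_comm]
  congr 1
  rw [and_comm, and_comm (a := A = ∅)]

lemma fz_dinf_symm [MetricSpace X] (A B : X → ℝ) : dinf A B = dinf B A := by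
  unfold dinf
  simp only [fz_eHd_symm (cut A _)]

lemma fz_le [MetricSpace X] [CompactSpace X] [Nonempty X] {A B : X → ℝ}
    (hA : IsFuzzy A) (hB : IsFuzzy B) (h : dinf A B < Metric.diam (Set.univ : Set X)) :
    sSup (Set.range B) ≤ sSup (Set.range A) := by
  by_contra! hlt
  obtain ⟨a, ha, ha'⟩ := fz_max hA
  obtain ⟨b, hb, hb'⟩ := fz_max hB
  refine absurd h (not_lt.2 ?_)
  refine le_csSup ⟨Metric.diam (Set.univ : Set X), ?_⟩ ⟨B b, ⟨?_, (hB.1 b).2⟩, ?_⟩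
  · rintro _ ⟨α, -, rfl⟩
    exact fz_eHd_le _ _
  · have := (hA.1 a).1
    linarith
  · have h1 : cut A (B b) = ∅ := by
      ext x
      simp only [cut, mem_setOf_eq, mem_empty_iff_false, iff_false, not_le]
      linarith [ha' x]
    have h2 : (cut B (B b)).Nonempty := ⟨b, le_refl (B b)⟩
    unfold eHd
    rw [if_neg]
    rw [h1]
    simpa using h2.ne_empty

lemma fz_eq [MetricSpace X] [CompactSpace X] [Nonempty X] {A B : X → ℝ}
    (hA : IsFuzzy A) (hB : IsFuzzy B) (h : dinf A B < Metric.diam (Set.univ : Set X)) :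
    sSup (Set.range A) = sSup (Set.range B) :=
  le_antisymm (fz_le hB hA (fz_dinf_symm A B ▸ h)) (fz_le hA hB h)

lemma fz_zadeh [MetricSpace X] [CompactSpace X] [Nonempty X] {T : X → X}
    (hTs : Function.Surjective T) {A : X → ℝ} (hA : IsFuzzy A) :
    sSup (Set.range (zadeh T A)) = sSup (Set.range A) := by
  obtain ⟨a, ha, ha'⟩ := fz_max hA
  have hle : ∀ x, zadeh T A x ≤ sSup (Set.range A) := by
    intro x
    obtain ⟨y, hy⟩ := hTs x
    refine csSup_le ⟨A y, y, hy, rfl⟩ ?_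
    rintro _ ⟨z, -, rfl⟩
    exact ha' z
  have hg : sSup (Set.range A) ≤ zadeh T A (T a) := by
    refine le_csSup ⟨sSup (Set.range A), ?_⟩ ⟨a, rfl, ha⟩
    rintro _ ⟨z, -, rfl⟩
    exact ha' z
  have h : IsGreatest (Set.range (zadeh T A)) (sSup (Set.range A)) := by
    refine ⟨⟨T a, le_antisymm (hle _) hg⟩, ?_⟩
    rintro _ ⟨y, rfl⟩
    exact hle y
  exact h.csSup_eq

/-- If `C` is a nonempty closed `T_F`-invariant subset of `𝔽₀(X)` on which Zadeh's
extension is topologically transitive, then all elements of `C` have the same maximum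
value; equivalently `C ⊆ 𝔽^{=λ}(X)` for some `λ ∈ [0,1]`. -/
theorem transitive_subsystem_constant_max {X : Type*} [MetricSpace X] [CompactSpace X] [Nontrivial X]
    (T : X → X) (hT : Continuous T) (hTs : Function.Surjective T)
    (C : Set (X → ℝ)) (hC : C ⊆ F0 X) (hCne : C.Nonempty)
    (hCclosed : ∀ A ∈ F0 X, (∀ ε > 0, ∃ B ∈ C, dinf A B < ε) → A ∈ C)
    (hCinv : ∀ A ∈ C, zadeh T A ∈ C)
    (htrans : TransOn dinf (zadeh T) C) :
    (∀ A ∈ C, ∀ B ∈ C, sSup (Set.range A) = sSup (Set.range B)) ∧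
      ∃ lam ∈ Set.Icc (0:ℝ) 1, C ⊆ Feq X lam := by
  have hd : 0 < Metric.diam (Set.univ : Set X) := by
    obtain ⟨x, y, hxy⟩ := exists_pair_ne X
    exact (dist_pos.2 hxy).trans_le
      (Metric.dist_le_diam_of_mem isCompact_univ.isBounded trivial trivial)
  have hit : ∀ n : ℕ, ∀ E ∈ C, (zadeh T)^[n] E ∈ C ∧
      sSup (Set.range ((zadeh T)^[n] E)) = sSup (Set.range E) := by
    intro n
    induction n with
    | zero => exact fun E hE => ⟨hE, rfl⟩
    | succ k ih =>
      intro E hE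
      rw [Function.iterate_succ_apply]
      exact ⟨(ih _ (hCinv E hE)).1, (ih _ (hCinv E hE)).2.trans (fz_zadeh hTs (hC hE).1)⟩
  have key : ∀ A ∈ C, ∀ B ∈ C, sSup (Set.range A) = sSup (Set.range B) := by
    intro A hA B hB
    obtain ⟨n, E, hE, h1, h2⟩ := htrans A hA B hB _ hd
    have e1 := fz_eq (hC hE).1 (hC hA).1 h1
    have e2 := fz_eq (hC (hit n E hE).1).1 (hC hB).1 h2
    rw [← e1, ← e2, (hit n E hE).2]
  refine ⟨key, ?_⟩
  obtain ⟨A, hA⟩ := hCne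
  obtain ⟨a, ha, -⟩ := fz_max (hC hA).1
  refine ⟨sSup (Set.range A), ha ▸ (hC hA).1.1 a, fun B hB => ?_⟩
  obtain ⟨b, hb, hb'⟩ := fz_max (hC hB).1
  rw [key A hA B hB]
  exact ⟨(hC hB).1, ⟨b, hb⟩, hb'⟩
end

section
/- Let (X, T) be a dynamical system and λ ∈ (0,1]. If the Zadeh extension system (𝔽^{=λ}(X), T_F|_{𝔽^{=λ}(X)}) with the levelwise metric d_∞ is topologically transitive, then the induced hyperspace system (K(X), T_K) is weakly mixing. -/
open Metric Set TopologicalSpace Filter Function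
open scoped Classical

variable {X Y : Type*}

lemma aux_bdd {X : Type*} [MetricSpace X] [CompactSpace X] (A B : X → ℝ) (α : ℝ)
    (hα : α ∈ Set.Ioc (0:ℝ) 1) : eHd X (cut A α) (cut B α) ≤ dinf A B := by
  apply le_csSup
  · refine ⟨Metric.diam (Set.univ : Set X), ?_⟩
    rintro r ⟨β, -, rfl⟩
    have hb : Bornology.IsBounded (Set.univ : Set X) := isCompact_univ.isBounded
    unfold eHd
    split_ifs with h
    · rcases h with ⟨h1, h2⟩ | ⟨h1, h2⟩
      · refine (Metric.hausdorffDist_le_diam h1 (hb.subset (subset_univ _)) h2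
          (hb.subset (subset_univ _))).trans (Metric.diam_mono (subset_univ _) hb)
      · rw [h1, h2]; simp [Metric.diam_nonneg]
    · exact le_rfl
  · exact ⟨α, hα, rfl⟩

lemma aux_feq {X : Type*} [MetricSpace X] (lam : ℝ) (hlam : lam ∈ Set.Ioc (0:ℝ) 1)
    (S : Set X) (hS : IsClosed S) (hne : S.Nonempty) :
    S.indicator (fun _ => lam) ∈ Feq X lam := by
  refine ⟨⟨fun x => ?_, ?_⟩, ?_, fun x => ?_⟩
  · by_cases h : x ∈ S <;> simp [h, hlam.1.le, hlam.2]
  · exact hS.upperSemicontinuous_indicator hlam.1.le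
  · obtain ⟨x, hx⟩ := hne
    exact ⟨x, by simp [hx]⟩
  · by_cases h : x ∈ S <;> simp [h, hlam.1.le]

lemma aux_cut {X : Type*} (lam α : ℝ) (h0 : 0 < α) (h1 : α ≤ lam) (S : Set X) :
    cut (S.indicator (fun _ => lam)) α = S := by
  ext x
  by_cases h : x ∈ S <;> simp [cut, h, h1, h0]

lemma aux_zadeh {X : Type*} (T : X → X) (hTs : Function.Surjective T) (E : X → ℝ) (c : ℝ) (n : ℕ) :
    ∀ w, c < (zadeh T)^[n] E w → ∃ x, T^[n] x = w ∧ c < E x := by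
  induction n with
  | zero => intro w h; exact ⟨w, rfl, h⟩
  | succ n ih =>
    intro w h
    rw [Function.iterate_succ_apply'] at h
    obtain ⟨_, ⟨y, hy, rfl⟩, hc⟩ := exists_lt_of_lt_csSup
      (((Set.singleton_nonempty w).preimage hTs).image _) h
    obtain ⟨x, hx, hxc⟩ := ih y hc
    exact ⟨x, by rw [Function.iterate_succ_apply', hx]; exact hy, hxc⟩

lemma aux_mem {X : Type*} [MetricSpace X] [CompactSpace X] {A B : Set X} {ε : ℝ}
    (hA : A.Nonempty) (hB : B.Nonempty) (h : eHd X A B < ε) :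
    (∀ x ∈ A, ∃ y ∈ B, dist x y < ε) ∧ (∀ y ∈ B, ∃ x ∈ A, dist x y < ε) := by
  have hb : Bornology.IsBounded (Set.univ : Set X) := isCompact_univ.isBounded
  unfold eHd at h
  rw [if_pos (Or.inl ⟨hA, hB⟩)] at h
  have fin := Metric.hausdorffEDist_ne_top_of_nonempty_of_bounded hA hB
    (hb.subset (subset_univ _)) (hb.subset (subset_univ _))
  exact ⟨fun x hx => Metric.exists_dist_lt_of_hausdorffDist_lt hx h fin,
    fun y hy => Metric.exists_dist_lt_of_hausdorffDist_lt' hy h fin⟩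

lemma aux_a {X : Type*} [MetricSpace X] [CompactSpace X] [Nontrivial X]
    (T : X → X) (hTs : Function.Surjective T)
    (lam : ℝ) (hlam : lam ∈ Set.Ioc (0:ℝ) 1)
    (htrans : TransOn dinf (zadeh T) (Feq X lam))
    (U V W : Set X) (hU : IsOpen U) (hV : IsOpen V) (hW : IsOpen W)
    (hU' : U.Nonempty) (hV' : V.Nonempty) (hW' : W.Nonempty) :
    ∃ n : ℕ, (∃ x ∈ U, T^[n] x ∈ V) ∧ (∃ x ∈ U, T^[n] x ∈ W) := by
  obtain ⟨u, hu⟩ := hU'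
  obtain ⟨v, hv⟩ := hV'
  obtain ⟨w, hw⟩ := hW'
  obtain ⟨e1, he1, hb1⟩ := Metric.isOpen_iff.1 hU u hu
  obtain ⟨e2, he2, hb2⟩ := Metric.isOpen_iff.1 hV v hv
  obtain ⟨e3, he3, hb3⟩ := Metric.isOpen_iff.1 hW w hw
  have hb : Bornology.IsBounded (Set.univ : Set X) := isCompact_univ.isBounded
  have hd : 0 < Metric.diam (Set.univ : Set X) := by
    obtain ⟨a, b, hab⟩ := exists_pair_ne X
    exact (dist_pos.2 hab).trans_le (Metric.dist_le_diam_of_mem hb (mem_univ a) (mem_univ b))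
  obtain ⟨ε, hε, hε'⟩ : ∃ ε > 0, ε ≤ e1 ∧ ε ≤ e2 ∧ ε ≤ e3 ∧ ε ≤ Metric.diam (Set.univ : Set X) :=
    ⟨min e1 (min e2 (min e3 _)), lt_min he1 (lt_min he2 (lt_min he3 hd)), by simp⟩
  obtain ⟨h1, h2, h3, h4⟩ := hε'
  have hvw : ({v, w} : Set X).Nonempty := ⟨v, by simp⟩
  obtain ⟨n, E, hE, hEA, hEB⟩ := htrans _ (aux_feq lam hlam {u} isClosed_singleton (by simp))
    _ (aux_feq lam hlam {v, w} (Set.toFinite _).isClosed hvw) ε hε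
  have hl := hlam.1
  have k1 := (aux_bdd E _ (lam/2) ⟨by linarith, by linarith [hlam.2]⟩).trans_lt hEA
  have k2 := (aux_bdd _ _ lam hlam).trans_lt hEB
  rw [aux_cut lam _ (by linarith) (by linarith)] at k1
  rw [aux_cut lam _ hl le_rfl] at k2
  have hn1 : (cut E (lam/2)).Nonempty := by
    obtain ⟨x, hx⟩ := hE.2.1
    exact ⟨x, by simp only [cut, mem_setOf_eq]; linarith⟩
  have hn2 : (cut ((zadeh T)^[n] E) lam).Nonempty := by
    by_contra hne
    unfold eHd at k2
    rw [if_neg] at k2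
    · linarith
    · rintro (h | h)
      · exact hne h.1
      · exact hvw.ne_empty h.2
  have m1 := (aux_mem hn1 (by simp) k1).1
  have m2 := (aux_mem hn2 hvw k2).2
  have key : ∀ y ∈ ({v, w} : Set X), ∃ x ∈ U, dist (T^[n] x) y < ε := by
    intro y hy
    obtain ⟨z, hz, hzy⟩ := m2 y hy
    have hz' : lam ≤ (zadeh T)^[n] E z := hz
    obtain ⟨x, rfl, hx⟩ := aux_zadeh T hTs E (lam/2) n z (by linarith)
    obtain ⟨u', rfl, hxu⟩ := m1 x hx.le
    exact ⟨x, hb1 (Metric.mem_ball.2 (hxu.trans_le h1)), hzy⟩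
  obtain ⟨x, hx, hxv⟩ := key v (by simp)
  obtain ⟨y, hy, hyw⟩ := key w (by simp)
  exact ⟨n, ⟨x, hx, hb2 (Metric.mem_ball.2 (hxv.trans_le h2))⟩,
    ⟨y, hy, hb3 (Metric.mem_ball.2 (hyw.trans_le h3))⟩⟩

lemma aux_wm {X : Type*} [TopologicalSpace X] (T : X → X) (hT : Continuous T)
    (hTs : Function.Surjective T)
    (ha : ∀ U V W : Set X, IsOpen U → IsOpen V → IsOpen W → U.Nonempty → V.Nonempty →
      W.Nonempty → ∃ n : ℕ, (∃ x ∈ U, T^[n] x ∈ V) ∧ (∃ x ∈ U, T^[n] x ∈ W))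
    (U₁ V₁ U₂ V₂ : Set X) (hU₁ : IsOpen U₁) (hV₁ : IsOpen V₁) (hU₂ : IsOpen U₂) (hV₂ : IsOpen V₂)
    (nU₁ : U₁.Nonempty) (nV₁ : V₁.Nonempty) (nU₂ : U₂.Nonempty) (nV₂ : V₂.Nonempty) :
    ∃ n : ℕ, (∃ x ∈ U₁, T^[n] x ∈ V₁) ∧ (∃ x ∈ U₂, T^[n] x ∈ V₂) := by
  obtain ⟨m, ⟨z, hz, hz'⟩, -⟩ := ha U₁ U₂ U₂ hU₁ hU₂ hU₂ nU₁ nU₂ nU₂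
  obtain ⟨n, ⟨x, hx, hx'⟩, ⟨y, hy, hy'⟩⟩ := ha (U₁ ∩ T^[m] ⁻¹' U₂) V₁ (T^[m] ⁻¹' V₂)
    (hU₁.inter (hU₂.preimage (hT.iterate m))) hV₁ (hV₂.preimage (hT.iterate m))
    ⟨z, hz, hz'⟩ nV₁ (nV₂.preimage (hTs.iterate m))
  refine ⟨n, ⟨x, hx.1, hx'⟩, ⟨T^[m] y, hy.2, ?_⟩⟩
  rw [← Function.iterate_add_apply, add_comm, Function.iterate_add_apply]
  exact hy'

lemma aux_fin {X ι : Type*} [TopologicalSpace X] [Nonempty X] (T : X → X) (hT : Continuous T)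
    (hwm : ∀ U₁ V₁ U₂ V₂ : Set X, IsOpen U₁ → IsOpen V₁ → IsOpen U₂ → IsOpen V₂ →
      U₁.Nonempty → V₁.Nonempty → U₂.Nonempty → V₂.Nonempty →
      ∃ n : ℕ, (∃ x ∈ U₁, T^[n] x ∈ V₁) ∧ (∃ x ∈ U₂, T^[n] x ∈ V₂))
    (U V : ι → Set X) (hU : ∀ i, IsOpen (U i)) (hV : ∀ i, IsOpen (V i)) (s : Finset ι) :
    (∀ i ∈ s, (U i).Nonempty) → (∀ i ∈ s, (V i).Nonempty) →
    ∃ U' V' : Set X, IsOpen U' ∧ IsOpen V' ∧ U'.Nonempty ∧ V'.Nonempty ∧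
      ∀ n : ℕ, (∃ x ∈ U', T^[n] x ∈ V') → ∀ i ∈ s, ∃ x ∈ U i, T^[n] x ∈ V i := by
  induction s using Finset.induction_on with
  | empty => 
    intro _ _
    exact ⟨univ, univ, isOpen_univ, isOpen_univ, univ_nonempty, univ_nonempty, by simp⟩
  | insert a s ha ih =>
    intro nU nV
    obtain ⟨U', V', oU, oV, nU', nV', h⟩ := ih (fun i hi => nU i (Finset.mem_insert_of_mem hi))
      (fun i hi => nV i (Finset.mem_insert_of_mem hi))
    obtain ⟨m, ⟨x, hx, hx'⟩, ⟨y, hy, hy'⟩⟩ := hwm U' (U a) V' (V a) oU (hU a) oV (hV a) nU'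
      (nU a (Finset.mem_insert_self _ _)) nV' (nV a (Finset.mem_insert_self _ _))
    refine ⟨U' ∩ T^[m] ⁻¹' U a, V' ∩ T^[m] ⁻¹' V a, oU.inter ((hU a).preimage (hT.iterate m)),
      oV.inter ((hV a).preimage (hT.iterate m)), ⟨x, hx, hx'⟩, ⟨y, hy, hy'⟩, ?_⟩
    rintro n ⟨z, hz, hz'⟩ i hi
    rcases Finset.mem_insert.1 hi with rfl | hi
    · refine ⟨T^[m] z, hz.2, ?_⟩
      rw [← Function.iterate_add_apply, add_comm, Function.iterate_add_apply]
      exact hz'.2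
    · exact h n ⟨z, hz.1, hz'.1⟩ i hi

lemma aux_iter {X : Type*} [MetricSpace X] (T : X → X) (hT : Continuous T)
    (E : NonemptyCompacts X) (n : ℕ) : (((hyper T hT)^[n] E : NonemptyCompacts X) : Set X) = T^[n] '' E := by
  induction n with
  | zero => simp
  | succ n ih =>
    rw [Function.iterate_succ_apply', Function.iterate_succ', Set.image_comp, ← ih]
    rfl

lemma aux_net {X : Type*} [MetricSpace X] (A : NonemptyCompacts X) (ε : ℝ) (hε : 0 < ε) :
    ∃ F : Finset X, (∀ x ∈ F, x ∈ A) ∧ ∀ a ∈ A, ∃ x ∈ F, dist a x < ε := by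
  obtain ⟨t, ht, hf, hc⟩ := A.isCompact.finite_cover_balls hε
  refine ⟨hf.toFinset, fun x hx => ht (by simpa using hx), fun a ha => ?_⟩
  have := hc ha
  simp only [mem_iUnion, Metric.mem_ball] at this
  obtain ⟨x, hx, hd⟩ := this
  exact ⟨x, by simpa using hx, hd⟩

lemma aux_build {X : Type*} [MetricSpace X] (T : X → X) (hT : Continuous T)
    (A B : NonemptyCompacts X) (ε : ℝ) (hε : 0 < ε) (FA FB : Finset X)
    (hA : ∀ x ∈ FA, x ∈ A) (hA' : ∀ a ∈ A, ∃ x ∈ FA, dist a x < ε)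
    (hB : ∀ x ∈ FB, x ∈ B) (hB' : ∀ a ∈ B, ∃ x ∈ FB, dist a x < ε) (n : ℕ)
    (h : ∀ p ∈ FA ×ˢ FB, ∃ x ∈ Metric.ball p.1 ε, T^[n] x ∈ Metric.ball p.2 ε) :
    ∃ E : NonemptyCompacts X, dist E A ≤ 2 * ε ∧ dist ((hyper T hT)^[n] E) B ≤ 2 * ε := by
  have h' : ∀ p : X × X, ∃ x, p ∈ FA ×ˢ FB → dist x p.1 < ε ∧ dist (T^[n] x) p.2 < ε := by
    intro p
    by_cases hp : p ∈ FA ×ˢ FB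
    · obtain ⟨x, hx, hx'⟩ := h p hp
      exact ⟨x, fun _ => ⟨hx, hx'⟩⟩
    · exact ⟨p.1, fun h => absurd h hp⟩
  choose f hf using h'
  obtain ⟨a0, ha0⟩ := A.nonempty
  obtain ⟨b0, hb0⟩ := B.nonempty
  obtain ⟨a1, ha1, -⟩ := hA' a0 ha0
  obtain ⟨b1, hb1, -⟩ := hB' b0 hb0
  let E : NonemptyCompacts X := ⟨⟨f '' ((FA ×ˢ FB : Finset (X × X)) : Set (X × X)),
    ((Finset.finite_toSet _).image f).isCompact⟩,
    ⟨f (a1, b1), (a1, b1), by simp [ha1, hb1], rfl⟩⟩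
  have hE : (E : Set X) = f '' ((FA ×ˢ FB : Finset (X × X)) : Set (X × X)) := rfl
  refine ⟨E, ?_, ?_⟩
  · rw [NonemptyCompacts.dist_eq, hE]
    apply Metric.hausdorffDist_le_of_mem_dist (by linarith)
    · rintro _ ⟨p, hp, rfl⟩
      have hp : p ∈ FA ×ˢ FB := hp
      exact ⟨p.1, hA _ (Finset.mem_product.1 hp).1, by linarith [(hf p hp).1]⟩
    · intro a ha
      obtain ⟨x, hx, hd⟩ := hA' a ha
      have hp : (x, b1) ∈ FA ×ˢ FB := Finset.mem_product.2 ⟨hx, hb1⟩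
      refine ⟨f (x, b1), ⟨_, hp, rfl⟩, ?_⟩
      have := (hf _ hp).1
      rw [dist_comm] at this
      linarith [dist_triangle a x (f (x, b1))]
  · rw [NonemptyCompacts.dist_eq, aux_iter, hE]
    apply Metric.hausdorffDist_le_of_mem_dist (by linarith)
    · rintro _ ⟨_, ⟨p, hp, rfl⟩, rfl⟩
      have hp : p ∈ FA ×ˢ FB := hp
      exact ⟨p.2, hB _ (Finset.mem_product.1 hp).2, by linarith [(hf p hp).2]⟩
    · intro a ha
      obtain ⟨x, hx, hd⟩ := hB' a ha
      have hp : (a1, x) ∈ FA ×ˢ FB := Finset.mem_product.2 ⟨ha1, hx⟩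
      refine ⟨T^[n] (f (a1, x)), ⟨_, ⟨_, hp, rfl⟩, rfl⟩, ?_⟩
      have := (hf _ hp).2
      rw [dist_comm] at this
      linarith [dist_triangle a x (T^[n] (f (a1, x)))]

/-- If the Zadeh extension restricted to `𝔽^{=λ}(X)` is topologically transitive, then
the induced hyperspace system `(K(X), T_K)` is weakly mixing. -/
theorem hyper_weakMixing_of_zadeh_transitive {X : Type*} [MetricSpace X] [CompactSpace X] [Nontrivial X]
    (T : X → X) (hT : Continuous T) (hTs : Function.Surjective T)
    (lam : ℝ) (hlam : lam ∈ Set.Ioc (0:ℝ) 1)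
    (htrans : TransOn dinf (zadeh T) (Feq X lam)) :
    TopWeakMix (hyper T hT) := by
  have hwm := aux_wm T hT hTs (aux_a T hTs lam hlam htrans)
  rintro 𝒰 𝒱 hU hV ⟨⟨A₁, A₂⟩, hA⟩ ⟨⟨B₁, B₂⟩, hB⟩
  obtain ⟨e1, he1, hb1⟩ := Metric.isOpen_iff.1 hU _ hA
  obtain ⟨e2, he2, hb2⟩ := Metric.isOpen_iff.1 hV _ hB
  obtain ⟨ε, hε, h1, h2⟩ : ∃ ε > 0, 2 * ε < e1 ∧ 2 * ε < e2 :=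
    ⟨min e1 e2 / 3, by have := lt_min he1 he2; linarith,
      by have := lt_min he1 he2; linarith [min_le_left e1 e2],
      by have := lt_min he1 he2; linarith [min_le_right e1 e2]⟩
  obtain ⟨FA₁, a1, a1'⟩ := aux_net A₁ ε hε
  obtain ⟨FA₂, a2, a2'⟩ := aux_net A₂ ε hε
  obtain ⟨FB₁, b1, b1'⟩ := aux_net B₁ ε hε
  obtain ⟨FB₂, b2, b2'⟩ := aux_net B₂ ε hε
  obtain ⟨U', V', oU, oV, nU, nV, h⟩ := aux_fin T hT hwm
    (fun p : X × X => Metric.ball p.1 ε) (fun p => Metric.ball p.2 ε)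
    (fun _ => Metric.isOpen_ball) (fun _ => Metric.isOpen_ball)
    (FA₁ ×ˢ FB₁ ∪ FA₂ ×ˢ FB₂) (fun _ _ => Metric.nonempty_ball.2 hε)
    (fun _ _ => Metric.nonempty_ball.2 hε)
  obtain ⟨n, hn, -⟩ := hwm U' V' U' V' oU oV oU oV nU nV nU nV
  have h := h n hn
  obtain ⟨E₁, p1, q1⟩ := aux_build T hT A₁ B₁ ε hε FA₁ FB₁ a1 a1' b1 b1' n
    (fun p hp => h p (Finset.mem_union_left _ hp))
  obtain ⟨E₂, p2, q2⟩ := aux_build T hT A₂ B₂ ε hε FA₂ FB₂ a2 a2' b2 b2' n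
    (fun p hp => h p (Finset.mem_union_right _ hp))
  have hit : ∀ k : ℕ, (fun p : NonemptyCompacts X × NonemptyCompacts X =>
      (hyper T hT p.1, hyper T hT p.2))^[k] (E₁, E₂) =
      ((hyper T hT)^[k] E₁, (hyper T hT)^[k] E₂) := by
    intro k
    induction k with
    | zero => rfl
    | succ k ih => rw [Function.iterate_succ_apply', ih, Function.iterate_succ_apply',
        Function.iterate_succ_apply']
  refine ⟨n, _, ⟨(E₁, E₂), hb1 ?_, rfl⟩, ?_⟩
  · rw [Metric.mem_ball, Prod.dist_eq]
    exact max_lt (by simpa using p1.trans_lt h1) (by simpa using p2.trans_lt h1)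
  · rw [hit]
    apply hb2
    rw [Metric.mem_ball, Prod.dist_eq]
    exact max_lt (q1.trans_lt h2) (q2.trans_lt h2)
end

section
/- Let (X, T) be a dynamical system and λ ∈ (0,1]. If the induced hyperspace system (K(X), T_K) is weakly mixing, then the Zadeh extension system (𝔽^{=λ}(X), T_F|_{𝔽^{=λ}(X)}) with the levelwise metric d_∞ is weakly mixing. -/
open Metric Set TopologicalSpace Filter Function
open scoped Classical

variable {X Y : Type*}

lemma aux_dinf_le {X : Type*} [MetricSpace X] [CompactSpace X] {J : Type*}
    (G A : X → ℝ) (p f : J → X) (w : J → ℝ) (r : ℝ) (hr : 0 ≤ r)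
    (hG : ∀ α, 0 < α → cut G α = p '' {j | α ≤ w j})
    (h1 : ∀ j, w j ≤ A (f j) ∧ dist (p j) (f j) ≤ r)
    (h2 : ∀ x, ∃ j, A x ≤ w j ∧ dist x (p j) ≤ r) : dinf G A ≤ r := by
  unfold dinf
  apply Real.sSup_le _ hr
  rintro s ⟨α, hα, rfl⟩
  have e1 : ∀ x ∈ cut G α, ∃ y ∈ cut A α, dist x y ≤ r := by
    rw [hG α hα.1]
    rintro _ ⟨j, hj, rfl⟩
    exact ⟨f j, le_trans hj (h1 j).1, (h1 j).2⟩
  have e2 : ∀ x ∈ cut A α, ∃ y ∈ cut G α, dist x y ≤ r := by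
    rw [hG α hα.1]
    intro x hx
    obtain ⟨j, hj, hd⟩ := h2 x
    exact ⟨p j, ⟨j, le_trans hx hj, rfl⟩, hd⟩
  have hc : ((cut G α).Nonempty ∧ (cut A α).Nonempty) ∨ (cut G α = ∅ ∧ cut A α = ∅) := by
    rcases (cut G α).eq_empty_or_nonempty with h | h
    · right
      refine ⟨h, ?_⟩
      by_contra hne
      obtain ⟨x, hx⟩ := Set.nonempty_iff_ne_empty.2 hne
      obtain ⟨y, hy, _⟩ := e2 x hx
      rw [h] at hy
      exact hy
    · left
      obtain ⟨x, hx⟩ := h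
      obtain ⟨y, hy, _⟩ := e1 x hx
      exact ⟨⟨x, hx⟩, ⟨y, hy⟩⟩
  unfold eHd
  rw [if_pos hc]
  exact Metric.hausdorffDist_le_of_mem_dist hr e1 e2

lemma aux_zadeh_nonneg {X : Type*} [TopologicalSpace X] (T : X → X) (A : X → ℝ) (hA : IsFuzzy A) (x : X) :
    zadeh T A x ∈ Set.Icc (0:ℝ) 1 := by
  constructor
  · apply Real.sSup_nonneg
    rintro _ ⟨y, _, rfl⟩
    exact (hA.1 y).1
  · apply Real.sSup_le _ zero_le_one
    rintro _ ⟨y, _, rfl⟩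
    exact (hA.1 y).2

lemma aux_cut_zadeh {X : Type*} [MetricSpace X] [CompactSpace X] (T : X → X) (hT : Continuous T)
    (A : X → ℝ) (hA : IsFuzzy A) (α : ℝ) (hα : 0 < α) :
    cut (zadeh T A) α = T '' cut A α := by
  have hbd : ∀ x, BddAbove (A '' (T ⁻¹' {x})) := by
    intro x
    refine ⟨1, ?_⟩
    rintro _ ⟨y, _, rfl⟩
    exact (hA.1 y).2
  ext x
  constructor
  · intro hx
    change α ≤ sSup _ at hx
    have hne : (T ⁻¹' {x}).Nonempty := by
      by_contra h
      rw [Set.not_nonempty_iff_eq_empty] at h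
      rw [h, Set.image_empty, Real.sSup_empty] at hx
      linarith
    have hcl : IsCompact (T ⁻¹' {x}) := (isClosed_singleton.preimage hT).isCompact
    obtain ⟨y, hy, hmax⟩ := UpperSemicontinuousOn.exists_isMaxOn hne hcl (hA.2.upperSemicontinuousOn _)
    refine ⟨y, hx.trans ?_, hy⟩
    apply csSup_le (hne.image _)
    rintro _ ⟨z, hz, rfl⟩
    exact hmax hz
  · rintro ⟨y, hy, rfl⟩
    exact le_trans hy (le_csSup (hbd _) ⟨y, rfl, rfl⟩)

lemma aux_fuzzy_of {X : Type*} [MetricSpace X] (A : X → ℝ) (h : ∀ x, A x ∈ Set.Icc (0:ℝ) 1)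
    (hc : ∀ α, 0 < α → IsClosed (cut A α)) : IsFuzzy A := by
  refine ⟨h, ?_⟩
  rw [upperSemicontinuous_iff_isClosed_preimage]
  intro α
  by_cases hα : 0 < α
  · exact hc α hα
  · have : A ⁻¹' Set.Ici α = Set.univ := by
      ext x
      simp only [Set.mem_preimage, Set.mem_Ici, Set.mem_univ, iff_true]
      linarith [(h x).1]
    rw [this]
    exact isClosed_univ

lemma aux_fuzzy_zadeh {X : Type*} [MetricSpace X] [CompactSpace X] (T : X → X) (hT : Continuous T)
    (A : X → ℝ) (hA : IsFuzzy A) : IsFuzzy (zadeh T A) := by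
  apply aux_fuzzy_of _ (aux_zadeh_nonneg T A hA)
  intro α hα
  rw [aux_cut_zadeh T hT A hA α hα]
  have : IsClosed (cut A α) := (upperSemicontinuous_iff_isClosed_preimage.1 hA.2) α
  exact (this.isCompact.image hT).isClosed

lemma aux_iter_s2 {X : Type*} [MetricSpace X] [CompactSpace X] (T : X → X) (hT : Continuous T)
    (A : X → ℝ) (hA : IsFuzzy A) (n : ℕ) :
    IsFuzzy ((zadeh T)^[n] A) ∧ ∀ α, 0 < α → cut ((zadeh T)^[n] A) α = T^[n] '' cut A α := by
  induction n with
  | zero => simp [hA]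
  | succ n ih =>
    rw [Function.iterate_succ_apply', Function.iterate_succ']
    refine ⟨aux_fuzzy_zadeh T hT _ ih.1, fun α hα => ?_⟩
    rw [aux_cut_zadeh T hT _ ih.1 α hα, ih.2 α hα, Set.image_comp]

/-- finitely supported fuzzy set -/
lemma aux_exists_fin {X : Type*} [MetricSpace X] {J : Type*} [Finite J] [Nonempty J] (p : J → X) (w : J → ℝ) (lam : ℝ)
    (hlam : lam ∈ Set.Ioc (0:ℝ) 1) (hw : ∀ j, w j ≤ lam) (hmax : ∃ j, w j = lam) :
    ∃ E ∈ Feq X lam, ∀ α, 0 < α → cut E α = p '' {j | α ≤ w j} := by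
  classical
  let E : X → ℝ := fun x => max 0 (⨆ j, if x = p j then w j else 0)
  have hle : ∀ x, E x ≤ lam := by
    intro x
    apply max_le hlam.1.le
    apply ciSup_le
    intro j
    split_ifs
    · exact hw j
    · exact hlam.1.le
  have hcut : ∀ α, 0 < α → cut E α = p '' {j | α ≤ w j} := by
    intro α hα
    ext x
    constructor
    · intro hx
      rcases le_max_iff.1 (show α ≤ max _ _ from hx) with h | h
      · linarith
      · obtain ⟨j, hj⟩ := exists_eq_ciSup_of_finite (f := fun j => if x = p j then w j else 0)
        rw [← hj] at h
        split_ifs at h with hx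
        · exact ⟨j, h, hx.symm⟩
        · linarith
    · rintro ⟨j, hj, rfl⟩
      change α ≤ max 0 (⨆ j_1, if p j = p j_1 then w j_1 else 0)
      apply le_trans _ (le_max_right _ _)
      refine le_trans ?_ (le_ciSup (Set.finite_range _).bddAbove j)
      simpa using hj
  refine ⟨E, ⟨?_, ?_, hle⟩, hcut⟩
  · apply aux_fuzzy_of
    · exact fun x => ⟨le_max_left _ _, (hle x).trans hlam.2⟩
    · intro α hα
      rw [hcut α hα]
      exact (Set.toFinite _).isClosed
  · obtain ⟨j, hj⟩ := hmax
    refine ⟨p j, le_antisymm (hle _) ?_⟩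
    have : p j ∈ cut E lam := by
      rw [hcut lam hlam.1]
      exact ⟨j, hj.ge, rfl⟩
    exact this

lemma aux_hyper_iter {X : Type*} [TopologicalSpace X] (T : X → X) (hT : Continuous T) (n : ℕ)
    (K : NonemptyCompacts X) : (((hyper T hT)^[n] K : NonemptyCompacts X) : Set X) = T^[n] '' K := by
  induction n with
  | zero => simp
  | succ n ih =>
    rw [Function.iterate_succ_apply', Function.iterate_succ', Set.image_comp, ← ih]
    rfl

lemma aux_wm2 {X : Type*} [MetricSpace X] (T : X → X) (hT : Continuous T)
    (hwm : TopWeakMix (hyper T hT)) (U₁ U₂ V₁ V₂ : Set X) (hU₁ : IsOpen U₁) (hU₂ : IsOpen U₂)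
    (hV₁ : IsOpen V₁) (hV₂ : IsOpen V₂) (nU₁ : U₁.Nonempty) (nU₂ : U₂.Nonempty)
    (nV₁ : V₁.Nonempty) (nV₂ : V₂.Nonempty) :
    ∃ n : ℕ, (∃ x ∈ U₁, T^[n] x ∈ V₁) ∧ (∃ x ∈ U₂, T^[n] x ∈ V₂) := by
  have key : ∀ U : Set X, U.Nonempty → {K : NonemptyCompacts X | (K : Set X) ⊆ U}.Nonempty := by
    rintro U ⟨x, hx⟩
    exact ⟨{x}, by simpa using hx⟩
  obtain ⟨n, ⟨KL', ⟨⟨K, L⟩, ⟨hK, hL⟩, rfl⟩, hKV, hLV⟩⟩ := hwm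
    ({K : NonemptyCompacts X | (K : Set X) ⊆ U₁} ×ˢ {K : NonemptyCompacts X | (K : Set X) ⊆ U₂})
    ({K : NonemptyCompacts X | (K : Set X) ⊆ V₁} ×ˢ {K : NonemptyCompacts X | (K : Set X) ⊆ V₂})
    ((NonemptyCompacts.isOpen_subsets_of_isOpen hU₁).prod (NonemptyCompacts.isOpen_subsets_of_isOpen hU₂))
    ((NonemptyCompacts.isOpen_subsets_of_isOpen hV₁).prod (NonemptyCompacts.isOpen_subsets_of_isOpen hV₂))
    ((key _ nU₁).prod (key _ nU₂)) ((key _ nV₁).prod (key _ nV₂))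
  have hit : (fun p : NonemptyCompacts X × NonemptyCompacts X =>
      (hyper T hT p.1, hyper T hT p.2))^[n] (K, L) = ((hyper T hT)^[n] K, (hyper T hT)^[n] L) := by
    have := Prod.map_iterate (hyper T hT) (hyper T hT) n
    exact congrFun this (K, L)
  rw [hit] at hKV hLV
  simp only [Set.mem_ofPred_eq, aux_hyper_iter] at hK hL hKV hLV
  obtain ⟨x, hx⟩ := K.nonempty
  obtain ⟨y, hy⟩ := L.nonempty
  exact ⟨n, ⟨x, hK hx, hKV ⟨x, hx, rfl⟩⟩, ⟨y, hL hy, hLV ⟨y, hy, rfl⟩⟩⟩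

lemma aux_furst {X : Type*} [MetricSpace X] [Nonempty X] (T : X → X) (hT : Continuous T)
    (hwm : TopWeakMix (hyper T hT)) {J : Type*} (U V : J → Set X) (hU : ∀ j, IsOpen (U j))
    (hV : ∀ j, IsOpen (V j)) (nU : ∀ j, (U j).Nonempty) (nV : ∀ j, (V j).Nonempty) (s : Finset J) :
    ∃ P Q : Set X, IsOpen P ∧ IsOpen Q ∧ P.Nonempty ∧ Q.Nonempty ∧
      ∀ n : ℕ, (∃ x ∈ P, T^[n] x ∈ Q) → ∀ j ∈ s, ∃ x ∈ U j, T^[n] x ∈ V j := by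
  classical
  induction s using Finset.induction_on with
  | empty => exact ⟨Set.univ, Set.univ, isOpen_univ, isOpen_univ, Set.univ_nonempty, Set.univ_nonempty, by simp⟩
  | insert j s hj ih =>
    obtain ⟨P, Q, hP, hQ, nP, nQ, h⟩ := ih
    obtain ⟨m, ⟨x, hx, hx'⟩, ⟨y, hy, hy'⟩⟩ := aux_wm2 T hT hwm P Q (U j) (V j) hP hQ (hU j) (hV j)
      nP nQ (nU j) (nV j)
    have hTm := hT.iterate m
    refine ⟨P ∩ T^[m] ⁻¹' U j, Q ∩ T^[m] ⁻¹' V j, hP.inter ((hU j).preimage hTm),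
      hQ.inter ((hV j).preimage hTm), ⟨x, hx, hx'⟩, ⟨y, hy, hy'⟩, ?_⟩
    rintro n ⟨z, ⟨hz1, hz2⟩, ⟨hz3, hz4⟩⟩ i hi
    rcases Finset.mem_insert.1 hi with rfl | hi
    · refine ⟨T^[m] z, hz2, ?_⟩
      rw [← Function.iterate_add_apply, add_comm, Function.iterate_add_apply]
      exact hz4
    · exact h n ⟨z, hz1, hz3⟩ i hi

lemma aux_all {X : Type*} [MetricSpace X] [Nonempty X] (T : X → X) (hT : Continuous T)
    (hwm : TopWeakMix (hyper T hT)) {J : Type*} [Finite J] (U V : J → Set X) (hU : ∀ j, IsOpen (U j))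
    (hV : ∀ j, IsOpen (V j)) (nU : ∀ j, (U j).Nonempty) (nV : ∀ j, (V j).Nonempty) :
    ∃ n : ℕ, ∀ j, ∃ x ∈ U j, T^[n] x ∈ V j := by
  cases nonempty_fintype J
  obtain ⟨P, Q, hP, hQ, nP, nQ, h⟩ := aux_furst T hT hwm U V hU hV nU nV Finset.univ
  obtain ⟨n, hn, _⟩ := aux_wm2 T hT hwm P P Q Q hP hP hQ hQ nP nP nQ nQ
  exact ⟨n, fun j => h n hn j (Finset.mem_univ j)⟩

lemma aux_sup {X : Type*} [MetricSpace X] [CompactSpace X] {ι : Type*} (c : ι → X) (r : ℝ) (hr : 0 < r)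
    (hc : ∀ x, ∃ i, dist x (c i) < r) (lam : ℝ) (A : X → ℝ) (hA : A ∈ Feq X lam) :
    ∃ f : ι → X, (∀ i, dist (f i) (c i) ≤ r) ∧ (∀ x i, dist x (c i) < r → A x ≤ A (f i)) ∧
      ∃ i, A (f i) = lam := by
  have : ∀ i, ∃ y ∈ closedBall (c i) r, IsMaxOn A (closedBall (c i) r) y := fun i =>
    UpperSemicontinuousOn.exists_isMaxOn ⟨c i, mem_closedBall_self hr.le⟩
      isClosed_closedBall.isCompact (hA.1.2.upperSemicontinuousOn _)
  choose f hf hm using this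
  refine ⟨f, hf, fun x i hx => hm i (mem_closedBall.2 hx.le), ?_⟩
  obtain ⟨x, hx⟩ := hA.2.1
  obtain ⟨i, hi⟩ := hc x
  exact ⟨i, le_antisymm (hA.2.2 _) (hx ▸ hm i (mem_closedBall.2 hi.le))⟩

lemma aux_pair {X : Type*} [MetricSpace X] [CompactSpace X] (T : X → X) (hT : Continuous T)
    {ι : Type*} [Finite ι] (c : ι → X) (r : ℝ) (hr : 0 < r)
    (hc : ∀ x, ∃ i, dist x (c i) < r) (lam : ℝ) (hlam : lam ∈ Set.Ioc (0:ℝ) 1) (n : ℕ)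
    (p : ι × ι → X) (hp : ∀ j, dist (p j) (c j.1) < r ∧ dist (T^[n] (p j)) (c j.2) < r)
    (A B : X → ℝ) (hA : A ∈ Feq X lam) (hB : B ∈ Feq X lam) :
    ∃ E ∈ Feq X lam, dinf E A ≤ 2 * r ∧ dinf ((zadeh T)^[n] E) B ≤ 2 * r := by
  obtain ⟨f, hf, hfm, i₀, hi₀⟩ := aux_sup c r hr hc lam A hA
  obtain ⟨g, hg, hgm, j₀, hj₀⟩ := aux_sup c r hr hc lam B hB
  have : Nonempty (ι × ι) := ⟨(i₀, j₀)⟩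
  let w : ι × ι → ℝ := fun j => min (A (f j.1)) (B (g j.2))
  obtain ⟨E, hE, hcut⟩ := aux_exists_fin p w lam hlam
    (fun j => (min_le_left _ _).trans (hA.2.2 _)) ⟨(i₀, j₀), by simp [w, hi₀, hj₀]⟩
  refine ⟨E, hE, ?_, ?_⟩
  · refine aux_dinf_le E A p (fun j => f j.1) w _ (by linarith) hcut ?_ ?_
    · intro j
      refine ⟨min_le_left _ _, ?_⟩
      have := dist_triangle_right (p j) (f j.1) (c j.1)
      linarith [(hp j).1, hf j.1]
    · intro x
      obtain ⟨i, hi⟩ := hc x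
      refine ⟨(i, j₀), le_min (hfm x i hi) (hj₀ ▸ hA.2.2 x), ?_⟩
      have := dist_triangle_right x (p (i, j₀)) (c i)
      have h2 := (hp (i, j₀)).1
      dsimp only at h2
      linarith
  · refine aux_dinf_le _ B (fun j => T^[n] (p j)) (fun j => g j.2) w _ (by linarith) ?_ ?_ ?_
    · intro α hα
      rw [(aux_iter_s2 T hT E hE.1 n).2 α hα, hcut α hα, Set.image_image]
    · intro j
      refine ⟨min_le_right _ _, ?_⟩
      have := dist_triangle_right (T^[n] (p j)) (g j.2) (c j.2)
      linarith [(hp j).2, hg j.2]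
    · intro x
      obtain ⟨i, hi⟩ := hc x
      refine ⟨(i₀, i), le_min (hi₀ ▸ hB.2.2 x) (hgm x i hi), ?_⟩
      have := dist_triangle_right x (T^[n] (p (i₀, i))) (c i)
      have h2 := (hp (i₀, i)).2
      dsimp only at h2
      linarith

/-- If the induced hyperspace system `(K(X), T_K)` is weakly mixing, then the Zadeh
extension restricted to `𝔽^{=λ}(X)` is weakly mixing. -/
theorem zadeh_weakMixing_of_hyper_weakMixing {X : Type*} [MetricSpace X] [CompactSpace X] [Nontrivial X]
    (T : X → X) (hT : Continuous T) (hTs : Function.Surjective T)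
    (lam : ℝ) (hlam : lam ∈ Set.Ioc (0:ℝ) 1)
    (hwm : TopWeakMix (hyper T hT)) :
    WeakMixOn dinf (zadeh T) (Feq X lam) := by
  intro A₁ hA₁ A₂ hA₂ B₁ hB₁ B₂ hB₂ ε hε
  obtain ⟨t, _, htf, ht⟩ := finite_cover_balls_of_compact (isCompact_univ (X := X))
    (show (0:ℝ) < ε / 4 by linarith)
  have : Finite t := htf
  let c : t → X := Subtype.val
  have hc : ∀ x, ∃ i, dist x (c i) < ε / 4 := by
    intro x
    have := ht (Set.mem_univ x)
    simp only [Set.mem_iUnion, mem_ball] at this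
    obtain ⟨y, hy, hd⟩ := this
    exact ⟨⟨y, hy⟩, hd⟩
  have hε4 : 0 < ε / 4 := by linarith
  obtain ⟨n, hn⟩ := aux_all T hT hwm (J := t × t) (fun j => ball (c j.1) (ε / 4))
    (fun j => ball (c j.2) (ε / 4)) (fun _ => isOpen_ball) (fun _ => isOpen_ball)
    (fun j => ⟨_, mem_ball_self hε4⟩) (fun j => ⟨_, mem_ball_self hε4⟩)
  choose p hp1 hp2 using hn
  obtain ⟨E₁, hE₁, h1, h1'⟩ := aux_pair T hT c (ε / 4) hε4 hc lam hlam n p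
    (fun j => ⟨hp1 j, hp2 j⟩) A₁ B₁ hA₁ hB₁
  obtain ⟨E₂, hE₂, h2, h2'⟩ := aux_pair T hT c (ε / 4) hε4 hc lam hlam n p
    (fun j => ⟨hp1 j, hp2 j⟩) A₂ B₂ hA₂ hB₂
  exact ⟨n, E₁, hE₁, E₂, hE₂, by linarith, by linarith, by linarith, by linarith⟩
end

section
/- Let (X, T) be a dynamical system. The following statements are equivalent: (1) (X, T) is weakly mixing; (2) (K(X), T_K) is topologically transitive; (3) (K(X), T_K) is weakly mixing; (4) for every λ ∈ (0,1], (𝔽^{=λ}(X), T_F|_{𝔽^{=λ}(X)}) is topologically transitive; (5) for every λ ∈ (0,1], (𝔽^{=λ}(X), T_F|_{𝔽^{=λ}(X)}) is weakly mixing. -/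
open Metric Set TopologicalSpace Filter Function
open scoped Classical

variable {X Y : Type*}

lemma iter_prod (S : Y → Y) (n : ℕ) (p : Y × Y) :
    (fun p : Y × Y => (S p.1, S p.2))^[n] p = (S^[n] p.1, S^[n] p.2) := by
  induction n generalizing p with
  | zero => rfl
  | succ n ih => simp only [Function.iterate_succ, Function.comp, ih]

lemma wm_pair [TopologicalSpace Y] {S : Y → Y} (h : TopWeakMix S) {U₁ U₂ V₁ V₂ : Set Y}
    (hU₁ : IsOpen U₁) (hU₂ : IsOpen U₂) (hV₁ : IsOpen V₁) (hV₂ : IsOpen V₂)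
    (nU₁ : U₁.Nonempty) (nU₂ : U₂.Nonempty) (nV₁ : V₁.Nonempty) (nV₂ : V₂.Nonempty) :
    ∃ n : ℕ, (∃ x ∈ U₁, S^[n] x ∈ V₁) ∧ (∃ x ∈ U₂, S^[n] x ∈ V₂) := by
  obtain ⟨n, q, ⟨p, hp, rfl⟩, hq⟩ := h (U₁ ×ˢ U₂) (V₁ ×ˢ V₂) (hU₁.prod hU₂) (hV₁.prod hV₂)
    (nU₁.prod nU₂) (nV₁.prod nV₂)
  rw [iter_prod] at hq
  exact ⟨n, ⟨p.1, hp.1, hq.1⟩, ⟨p.2, hp.2, hq.2⟩⟩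

lemma furst [TopologicalSpace Y] [Nonempty Y] {S : Y → Y} (hS : Continuous S) (h : TopWeakMix S)
    {ι : Type*} (t : Finset ι) (U V : ι → Set Y) (hU : ∀ i, IsOpen (U i)) (hV : ∀ i, IsOpen (V i))
    (nU : ∀ i, (U i).Nonempty) (nV : ∀ i, (V i).Nonempty) :
    ∃ U' V' : Set Y, IsOpen U' ∧ IsOpen V' ∧ U'.Nonempty ∧ V'.Nonempty ∧
      ∀ n : ℕ, (∃ x ∈ U', S^[n] x ∈ V') → ∀ i ∈ t, ∃ x ∈ U i, S^[n] x ∈ V i := by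
  induction t using Finset.induction_on with
  | empty => exact ⟨univ, univ, isOpen_univ, isOpen_univ, univ_nonempty, univ_nonempty, by simp⟩
  | insert i t hi ih =>
    obtain ⟨U', V', oU, oV, neU, neV, H⟩ := ih
    obtain ⟨k, ⟨x, hx, hx'⟩, ⟨y, hy, hy'⟩⟩ := wm_pair h oU oV (hU i) (hV i) neU neV (nU i) (nV i)
    refine ⟨U' ∩ S^[k] ⁻¹' U i, V' ∩ S^[k] ⁻¹' V i, oU.inter ((hU i).preimage (hS.iterate k)),
      oV.inter ((hV i).preimage (hS.iterate k)), ⟨x, hx, hx'⟩, ⟨y, hy, hy'⟩, ?_⟩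
    rintro n ⟨z, ⟨hz1, hz2⟩, hz3, hz4⟩ j hj
    rcases Finset.mem_insert.1 hj with rfl | hj
    · refine ⟨S^[k] z, hz2, ?_⟩
      rw [← Function.iterate_add_apply, add_comm, Function.iterate_add_apply]
      exact hz4
    · exact H n ⟨z, hz1, hz3⟩ j hj

lemma key_n [MetricSpace X] [CompactSpace X] [Nonempty X] {T : X → X} (hT : Continuous T)
    (h : TopWeakMix T) {δ : ℝ} (hδ : 0 < δ) :
    ∃ n : ℕ, ∀ a b : X, ∃ z, dist z a ≤ δ ∧ dist (T^[n] z) b ≤ δ := by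
  obtain ⟨t, -, ht, hc⟩ := finite_cover_balls_of_compact (isCompact_univ (X := X)) (half_pos hδ)
  obtain ⟨U', V', oU, oV, neU, neV, H⟩ := furst hT h (ht.toFinset ×ˢ ht.toFinset)
    (fun p : X × X => ball p.1 (δ/2)) (fun p : X × X => ball p.2 (δ/2))
    (fun _ => isOpen_ball) (fun _ => isOpen_ball)
    (fun p => ⟨p.1, mem_ball_self (half_pos hδ)⟩) (fun p => ⟨p.2, mem_ball_self (half_pos hδ)⟩)
  obtain ⟨n, hn, -⟩ := wm_pair h oU oU oV oV neU neU neV neV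
  refine ⟨n, fun a b => ?_⟩
  obtain ⟨x, hx, hax⟩ : ∃ x ∈ t, a ∈ ball x (δ/2) := by simpa using hc (mem_univ a)
  obtain ⟨y, hy, hby⟩ : ∃ x ∈ t, b ∈ ball x (δ/2) := by simpa using hc (mem_univ b)
  obtain ⟨z, hz1, hz2⟩ := H n hn (x, y) (by simp [hx, hy])
  simp only [mem_ball] at *
  refine ⟨z, ?_, ?_⟩
  · linarith [dist_triangle_right z a x]
  · linarith [dist_triangle_right (T^[n] z) b y]

/-- The joining set. -/
def joinSet [MetricSpace X] (S : X → X) (δ : ℝ) (A B : Set X) : Set X :=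
  {z | ∃ a b, dist z a ≤ δ ∧ dist (S z) b ≤ δ ∧ a ∈ A ∧ b ∈ B}

lemma joinSet_closed [MetricSpace X] [CompactSpace X] {S : X → X} (hS : Continuous S) (δ : ℝ)
    {A B : Set X} (hA : IsClosed A) (hB : IsClosed B) : IsClosed (joinSet S δ A B) := by
  have : IsClosed {p : X × X × X | dist p.1 p.2.1 ≤ δ ∧ dist (S p.1) p.2.2 ≤ δ ∧
      p.2.1 ∈ A ∧ p.2.2 ∈ B} := by
    have c1 : IsClosed {p : X × X × X | dist p.1 p.2.1 ≤ δ} :=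
      isClosed_le (by fun_prop) (by fun_prop)
    have c2 : IsClosed {p : X × X × X | dist (S p.1) p.2.2 ≤ δ} :=
      isClosed_le (by fun_prop) (by fun_prop)
    have c3 : IsClosed {p : X × X × X | p.2.1 ∈ A} :=
      hA.preimage (f := fun p : X × X × X => p.2.1) (by fun_prop)
    have c4 : IsClosed {p : X × X × X | p.2.2 ∈ B} :=
      hB.preimage (f := fun p : X × X × X => p.2.2) (by fun_prop)
    exact c1.inter (c2.inter (c3.inter c4))
  have h2 := (this.isCompact.image continuous_fst).isClosed
  convert h2 using 1
  ext z
  simp [joinSet]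

lemma joinSet_left [MetricSpace X] {S : X → X} {δ : ℝ} (hδ : 0 ≤ δ)
    (H : ∀ a b : X, ∃ z, dist z a ≤ δ ∧ dist (S z) b ≤ δ) {A B : Set X} (hB : B.Nonempty) :
    hausdorffDist (joinSet S δ A B) A ≤ δ := by
  apply hausdorffDist_le_of_mem_dist hδ
  · rintro z ⟨a, b, h1, h2, ha, hb⟩
    exact ⟨a, ha, h1⟩
  · intro a ha
    obtain ⟨b, hb⟩ := hB
    obtain ⟨z, h1, h2⟩ := H a b
    exact ⟨z, ⟨a, b, h1, h2, ha, hb⟩, by rwa [dist_comm]⟩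

lemma joinSet_right [MetricSpace X] {S : X → X} {δ : ℝ} (hδ : 0 ≤ δ)
    (H : ∀ a b : X, ∃ z, dist z a ≤ δ ∧ dist (S z) b ≤ δ) {A B : Set X} (hA : A.Nonempty) :
    hausdorffDist (S '' joinSet S δ A B) B ≤ δ := by
  apply hausdorffDist_le_of_mem_dist hδ
  · rintro _ ⟨z, ⟨a, b, h1, h2, ha, hb⟩, rfl⟩
    exact ⟨b, hb, h2⟩
  · intro b hb
    obtain ⟨a, ha⟩ := hA
    obtain ⟨z, h1, h2⟩ := H a b
    exact ⟨S z, ⟨z, ⟨a, b, h1, h2, ha, hb⟩, rfl⟩, by rwa [dist_comm]⟩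

lemma joinSet_nonempty [MetricSpace X] {S : X → X} {δ : ℝ}
    (H : ∀ a b : X, ∃ z, dist z a ≤ δ ∧ dist (S z) b ≤ δ) {A B : Set X} (hA : A.Nonempty)
    (hB : B.Nonempty) : (joinSet S δ A B).Nonempty := by
  obtain ⟨a, ha⟩ := hA
  obtain ⟨b, hb⟩ := hB
  obtain ⟨z, h1, h2⟩ := H a b
  exact ⟨z, a, b, h1, h2, ha, hb⟩

lemma hyper_iter [TopologicalSpace X] (T : X → X) (hT : Continuous T) (n : ℕ)
    (A : NonemptyCompacts X) : (((hyper T hT)^[n] A : NonemptyCompacts X) : Set X) = T^[n] '' A := by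
  induction n generalizing A with
  | zero => simp
  | succ n ih =>
    rw [Function.iterate_succ_apply, ih, Function.iterate_succ, image_comp]
    rfl

lemma one_three [MetricSpace X] [CompactSpace X] [Nonempty X] {T : X → X} (hT : Continuous T)
    (h : TopWeakMix T) : TopWeakMix (hyper T hT) := by
  rintro U V hU hV ⟨A, hA⟩ ⟨B, hB⟩
  obtain ⟨ε₁, h₁, hU⟩ := Metric.isOpen_iff.1 hU A hA
  obtain ⟨ε₂, h₂, hV⟩ := Metric.isOpen_iff.1 hV B hB
  set δ := min ε₁ ε₂ / 2 with hδd
  have hm : 0 < min ε₁ ε₂ := lt_min h₁ h₂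
  have hδ : 0 < δ := half_pos hm
  have l1 : δ < ε₁ := (half_lt_self hm).trans_le (min_le_left _ _)
  have l2 : δ < ε₂ := (half_lt_self hm).trans_le (min_le_right _ _)
  obtain ⟨n, hn⟩ := key_n hT h hδ
  let E : NonemptyCompacts X → NonemptyCompacts X → NonemptyCompacts X := fun A B =>
    ⟨⟨joinSet T^[n] δ A B, (joinSet_closed (hT.iterate n) δ A.isCompact.isClosed
      B.isCompact.isClosed).isCompact⟩, joinSet_nonempty hn A.nonempty B.nonempty⟩
  have e1 : ∀ A B, dist (E A B) A ≤ δ := fun A B => joinSet_left hδ.le hn B.nonempty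
  have e2 : ∀ A B, dist ((hyper T hT)^[n] (E A B)) B ≤ δ := fun A B => by
    rw [NonemptyCompacts.dist_eq, hyper_iter]
    exact joinSet_right hδ.le hn A.nonempty
  refine ⟨n, _, ⟨(E A.1 B.1, E A.2 B.2), hU ?_, rfl⟩, hV ?_⟩
  · rw [mem_ball, Prod.dist_eq]
    exact (max_le (e1 _ _) (e1 _ _)).trans_lt l1
  · rw [mem_ball, Prod.dist_eq, iter_prod]
    exact (max_le (e2 _ _) (e2 _ _)).trans_lt l2

lemma wm_trans [TopologicalSpace Y] {S : Y → Y} (h : TopWeakMix S) : TopTrans S := by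
  intro U V hU hV nU nV
  obtain ⟨n, ⟨x, hx, hx'⟩, -⟩ := wm_pair h hU hU hV hV nU nU nV nV
  exact ⟨n, S^[n] x, ⟨x, hx, rfl⟩, hx'⟩

lemma wm_of [MetricSpace X] [CompactSpace X] {T : X → X} (hT : Continuous T)
    (hTs : Function.Surjective T)
    (H : ∀ x y₁ y₂ : X, ∀ ε > 0, ∃ n : ℕ, ∃ C : Set X, C.Nonempty ∧ hausdorffDist C {x} < ε ∧
      hausdorffDist (T^[n] '' C) {y₁, y₂} < ε) : TopWeakMix T := by
  have a : ∀ U V₁ V₂ : Set X, IsOpen U → IsOpen V₁ → IsOpen V₂ → U.Nonempty → V₁.Nonempty →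
      V₂.Nonempty → ∃ n : ℕ, (∃ x ∈ U, T^[n] x ∈ V₁) ∧ ∃ x ∈ U, T^[n] x ∈ V₂ := by
    rintro U V₁ V₂ hU hV₁ hV₂ ⟨x, hx⟩ ⟨y₁, hy₁⟩ ⟨y₂, hy₂⟩
    obtain ⟨e, he, hU⟩ := Metric.isOpen_iff.1 hU x hx
    obtain ⟨e₁, he₁, hV₁⟩ := Metric.isOpen_iff.1 hV₁ y₁ hy₁
    obtain ⟨e₂, he₂, hV₂⟩ := Metric.isOpen_iff.1 hV₂ y₂ hy₂
    obtain ⟨n, C, nC, h1, h2⟩ := H x y₁ y₂ (min e (min e₁ e₂)) (lt_min he (lt_min he₁ he₂))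
    simp only [lt_min_iff] at h1 h2
    have hCU : ∀ z ∈ C, z ∈ U := by
      intro z hz
      obtain ⟨w, hw, hd⟩ := exists_dist_lt_of_hausdorffDist_lt hz h1.1
        (hausdorffEDist_ne_top_of_nonempty_of_bounded nC (singleton_nonempty _)
          (isBounded_of_compactSpace) (isBounded_of_compactSpace))
      rw [mem_singleton_iff] at hw
      subst hw
      exact hU hd
    have fin := (hausdorffEDist_ne_top_of_nonempty_of_bounded (nC.image T^[n])
        (insert_nonempty y₁ {y₂}) (isBounded_of_compactSpace) (isBounded_of_compactSpace))
    obtain ⟨_, ⟨z₁, hz₁, rfl⟩, d₁⟩ := exists_dist_lt_of_hausdorffDist_lt' (y := y₁)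
      (by simp) h2.2.1 fin
    obtain ⟨_, ⟨z₂, hz₂, rfl⟩, d₂⟩ := exists_dist_lt_of_hausdorffDist_lt' (y := y₂)
      (by simp) h2.2.2 fin
    exact ⟨n, ⟨z₁, hCU _ hz₁, hV₁ d₁⟩, ⟨z₂, hCU _ hz₂, hV₂ d₂⟩⟩
  rintro U V hU hV ⟨⟨u₁, u₂⟩, hu⟩ ⟨⟨v₁, v₂⟩, hv⟩
  obtain ⟨U₁, U₂, oU₁, oU₂, m₁, m₂, sU⟩ := isOpen_prod_iff.1 hU u₁ u₂ hu
  obtain ⟨V₁, V₂, oV₁, oV₂, k₁, k₂, sV⟩ := isOpen_prod_iff.1 hV v₁ v₂ hv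
  obtain ⟨n, ⟨x, hx, hx'⟩, -⟩ := a U₁ U₂ U₂ oU₁ oU₂ oU₂ ⟨_, m₁⟩ ⟨_, m₂⟩ ⟨_, m₂⟩
  obtain ⟨w, hw⟩ := hTs.iterate n v₂
  obtain ⟨m, ⟨p, hp, hp'⟩, ⟨q, hq, hq'⟩⟩ := a (U₁ ∩ T^[n] ⁻¹' U₂) V₁ (T^[n] ⁻¹' V₂)
    (oU₁.inter (oU₂.preimage (hT.iterate n))) oV₁ (oV₂.preimage (hT.iterate n))
    ⟨x, hx, hx'⟩ ⟨_, k₁⟩ ⟨w, by rw [mem_preimage, hw]; exact k₂⟩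
  refine ⟨m, _, ⟨(p, T^[n] q), sU ⟨hp.1, hq.2⟩, rfl⟩, sV ?_⟩
  rw [iter_prod]
  refine ⟨hp', ?_⟩
  show T^[m] (T^[n] q) ∈ V₂
  rw [← Function.iterate_add_apply, add_comm, Function.iterate_add_apply]
  exact hq'

lemma two_one [MetricSpace X] [CompactSpace X] {T : X → X} (hT : Continuous T)
    (hTs : Function.Surjective T) (h : TopTrans (hyper T hT)) : TopWeakMix T := by
  refine wm_of hT hTs fun x y₁ y₂ ε hε => ?_
  let P : NonemptyCompacts X := ⟨⟨{x}, isCompact_singleton⟩, singleton_nonempty x⟩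
  let Q : NonemptyCompacts X := ⟨⟨{y₁, y₂}, (Set.toFinite _).isCompact⟩, insert_nonempty y₁ {y₂}⟩
  obtain ⟨n, _, ⟨C, hC, rfl⟩, hC'⟩ := h (ball P ε) (ball Q ε) isOpen_ball isOpen_ball
    ⟨P, mem_ball_self hε⟩ ⟨Q, mem_ball_self hε⟩
  rw [mem_ball, NonemptyCompacts.dist_eq] at hC hC'
  rw [hyper_iter] at hC'
  exact ⟨n, C, C.nonempty, hC, hC'⟩

lemma usc_of_cut [TopologicalSpace X] {A : X → ℝ} (h : ∀ α, IsClosed (cut A α)) :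
    UpperSemicontinuous A :=
  upperSemicontinuous_iff_isClosed_preimage.2 h

lemma cut_closed [TopologicalSpace X] {A : X → ℝ} (h : UpperSemicontinuous A) (α : ℝ) :
    IsClosed (cut A α) :=
  upperSemicontinuous_iff_isClosed_preimage.1 h α

lemma cut_zadeh [MetricSpace X] [CompactSpace X] {T : X → X} (hT : Continuous T)
    (hTs : Function.Surjective T) {A : X → ℝ} (hA : IsFuzzy A) (α : ℝ) :
    cut (zadeh T A) α = T '' cut A α := by
  have bdd : ∀ s : Set X, BddAbove (A '' s) := fun s =>
    ⟨1, by rintro _ ⟨y, -, rfl⟩; exact (hA.1 y).2⟩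
  ext x
  constructor
  · intro hx
    obtain ⟨y, hy, hmax⟩ := UpperSemicontinuousOn.exists_isMaxOn (s := T ⁻¹' {x}) (f := A)
      (hTs x) (isClosed_singleton.preimage hT).isCompact (hA.2.upperSemicontinuousOn _)
    refine ⟨y, ?_, hy⟩
    show α ≤ A y
    refine le_trans hx ?_
    apply csSup_le (Set.Nonempty.image _ ⟨y, hy⟩)
    rintro _ ⟨w, hw, rfl⟩
    exact hmax hw
  · rintro ⟨y, hy, rfl⟩
    show α ≤ sSup (A '' (T ⁻¹' {T y}))
    exact le_trans hy (le_csSup (bdd _) ⟨y, rfl, rfl⟩)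

lemma fuzzy_of_cut [TopologicalSpace X] {A : X → ℝ} (h : ∀ α, IsClosed (cut A α))
    (h0 : ∀ x, x ∈ cut A 0) (h1 : ∀ x α, x ∈ cut A α → α ≤ 1) : IsFuzzy A :=
  ⟨fun x => ⟨h0 x, h1 x _ (le_refl (A x))⟩, usc_of_cut h⟩

lemma zadeh_fuzzy [MetricSpace X] [CompactSpace X] {T : X → X} (hT : Continuous T)
    (hTs : Function.Surjective T) {A : X → ℝ} (hA : IsFuzzy A) : IsFuzzy (zadeh T A) := by
  refine fuzzy_of_cut (fun α => ?_) (fun x => ?_) (fun x α => ?_)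
  · rw [cut_zadeh hT hTs hA]
    exact ((cut_closed hA.2 α).isCompact.image hT).isClosed
  · rw [cut_zadeh hT hTs hA]
    obtain ⟨y, rfl⟩ := hTs x
    exact ⟨y, (hA.1 y).1, rfl⟩
  · rw [cut_zadeh hT hTs hA]
    rintro ⟨y, hy, rfl⟩
    exact le_trans hy (hA.1 y).2

lemma cut_zadeh_iter [MetricSpace X] [CompactSpace X] {T : X → X} (hT : Continuous T)
    (hTs : Function.Surjective T) {A : X → ℝ} (hA : IsFuzzy A) (n : ℕ) (α : ℝ) :
    cut ((zadeh T)^[n] A) α = T^[n] '' cut A α := by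
  induction n generalizing A with
  | zero => simp
  | succ n ih =>
    rw [Function.iterate_succ_apply, ih (zadeh_fuzzy hT hTs hA), Function.iterate_succ, image_comp,
      cut_zadeh hT hTs hA]

lemma eHd_le_dinf [MetricSpace X] [CompactSpace X] (A B : X → ℝ) {α : ℝ}
    (hα : α ∈ Set.Ioc (0:ℝ) 1) : eHd X (cut A α) (cut B α) ≤ dinf A B := by
  refine le_csSup ⟨Metric.diam (univ : Set X), ?_⟩ ⟨α, hα, rfl⟩
  rintro _ ⟨β, -, rfl⟩
  unfold eHd
  split_ifs with h
  · rcases h with h | h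
    · exact (hausdorffDist_le_diam h.1 isBounded_of_compactSpace h.2
        isBounded_of_compactSpace).trans (diam_mono (subset_univ _) isBounded_of_compactSpace)
    · rw [h.1, h.2, hausdorffDist_self_zero]
      exact diam_nonneg
  · exact le_rfl

lemma dinf_le [MetricSpace X] {A B : X → ℝ} {δ lam : ℝ} (hδ : 0 ≤ δ)
    (h1 : ∀ α, α ≤ lam → (cut A α).Nonempty ∧ (cut B α).Nonempty ∧
      hausdorffDist (cut A α) (cut B α) ≤ δ)
    (h2 : ∀ α, lam < α → cut A α = ∅ ∧ cut B α = ∅) : dinf A B ≤ δ := by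
  refine csSup_le ⟨_, 1, ⟨one_pos, le_rfl⟩, rfl⟩ ?_
  rintro _ ⟨α, -, rfl⟩
  rcases le_or_gt α lam with h | h
  · obtain ⟨a, b, c⟩ := h1 α h
    rw [eHd, if_pos (Or.inl ⟨a, b⟩)]
    exact c
  · obtain ⟨a, b⟩ := h2 α h
    rw [eHd, if_pos (Or.inr ⟨a, b⟩), a, b, hausdorffDist_self_zero]
    exact hδ

lemma cut_nonempty_iff [TopologicalSpace X] {A : X → ℝ} {lam : ℝ} (hA : A ∈ Feq X lam) (α : ℝ) :
    (cut A α).Nonempty ↔ α ≤ lam := by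
  obtain ⟨-, ⟨x, hx⟩, hl⟩ := hA
  exact ⟨fun ⟨y, hy⟩ => le_trans hy (hl y), fun h => ⟨x, h.trans hx.ge⟩⟩

/-- The fuzzy joining. -/
noncomputable def joinF [MetricSpace X] (S : X → X) (δ : ℝ) (A B : X → ℝ) : X → ℝ :=
  fun z => sSup ((fun p : X × X => min (A p.1) (B p.2)) '' (closedBall z δ ×ˢ closedBall (S z) δ))

lemma cut_joinF [MetricSpace X] [CompactSpace X] (S : X → X) {δ : ℝ} (hδ : 0 ≤ δ) {A B : X → ℝ}
    (hA : IsFuzzy A) (hB : IsFuzzy B) (α : ℝ) :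
    cut (joinF S δ A B) α = joinSet S δ (cut A α) (cut B α) := by
  ext z
  have usc : UpperSemicontinuous (fun p : X × X => min (A p.1) (B p.2)) := by
    refine usc_of_cut fun α => ?_
    have := ((cut_closed hA.2 α).preimage (continuous_fst (Y := X))).inter
      ((cut_closed hB.2 α).preimage (continuous_snd (X := X)))
    convert this using 1
    ext p
    simp [cut]
  constructor
  · intro hz
    obtain ⟨p, hp, hmax⟩ := UpperSemicontinuousOn.exists_isMaxOn
      (s := closedBall z δ ×ˢ closedBall (S z) δ) (f := fun p : X × X => min (A p.1) (B p.2))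
      ⟨(z, S z), mem_closedBall_self hδ, mem_closedBall_self hδ⟩
      (isClosed_closedBall.prod isClosed_closedBall).isCompact (usc.upperSemicontinuousOn _)
    have : α ≤ min (A p.1) (B p.2) := by
      refine le_trans hz ?_
      apply csSup_le (Set.Nonempty.image _ ⟨p, hp⟩)
      rintro _ ⟨w, hw, rfl⟩
      exact hmax hw
    refine ⟨p.1, p.2, ?_, ?_, le_trans this (min_le_left _ _), le_trans this (min_le_right _ _)⟩
    · rw [dist_comm]; exact hp.1
    · rw [dist_comm]; exact hp.2
  · rintro ⟨a, b, h1, h2, ha, hb⟩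
    have ha' : α ≤ A a := ha
    have hb' : α ≤ B b := hb
    show α ≤ sSup ((fun p : X × X => min (A p.1) (B p.2)) '' (closedBall z δ ×ˢ closedBall (S z) δ))
    refine le_trans (le_min ha' hb') (le_csSup ⟨1, ?_⟩ ⟨(a, b), ⟨?_, ?_⟩, rfl⟩)
    · rintro _ ⟨y, -, rfl⟩
      exact (min_le_left _ _).trans (hA.1 _).2
    · rw [mem_closedBall, dist_comm]; exact h1
    · rw [mem_closedBall, dist_comm]; exact h2

lemma one_five [MetricSpace X] [CompactSpace X] [Nonempty X] {T : X → X} (hT : Continuous T)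
    (hTs : Function.Surjective T)
    (h : TopWeakMix T) (lam : ℝ) : WeakMixOn dinf (zadeh T) (Feq X lam) := by
  intro A₁ hA₁ A₂ hA₂ B₁ hB₁ B₂ hB₂ ε hε
  have hδ := half_pos hε
  have hδε := half_lt_self hε
  obtain ⟨n, hn⟩ := key_n hT h hδ
  have key : ∀ A ∈ Feq X lam, ∀ B ∈ Feq X lam, joinF T^[n] (ε/2) A B ∈ Feq X lam ∧
      dinf (joinF T^[n] (ε/2) A B) A < ε ∧ dinf ((zadeh T)^[n] (joinF T^[n] (ε/2) A B)) B < ε := by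
    intro A hA B hB
    have hc := cut_joinF T^[n] hδ.le hA.1 hB.1
    have hF : IsFuzzy (joinF T^[n] (ε/2) A B) := by
      refine fuzzy_of_cut (fun α => ?_) (fun x => ?_) (fun x α => ?_)
      · rw [hc]
        exact joinSet_closed (hT.iterate n) _ (cut_closed hA.1.2 α) (cut_closed hB.1.2 α)
      · rw [hc]
        exact ⟨x, T^[n] x, by simpa using hδ.le, by simpa using hδ.le, (hA.1.1 _).1, (hB.1.1 _).1⟩
      · rw [hc]
        rintro ⟨a, b, -, -, ha, -⟩
        exact le_trans ha (hA.1.1 _).2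
    have hE : joinF T^[n] (ε/2) A B ∈ Feq X lam := by
      have hle : ∀ x, joinF T^[n] (ε/2) A B x ≤ lam := by
        intro x
        have : x ∈ cut (joinF T^[n] (ε/2) A B) (joinF T^[n] (ε/2) A B x) :=
          le_refl (joinF T^[n] (ε/2) A B x)
        rw [hc] at this
        obtain ⟨a, b, -, -, ha, -⟩ := this
        exact le_trans ha (hA.2.2 a)
      refine ⟨hF, ?_, hle⟩
      obtain ⟨z, hz⟩ := joinSet_nonempty hn ((cut_nonempty_iff hA lam).2 le_rfl)
        ((cut_nonempty_iff hB lam).2 le_rfl)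
      rw [← hc] at hz
      exact ⟨z, le_antisymm (hle z) hz⟩
    have emp : ∀ C ∈ Feq X lam, ∀ α, lam < α → cut C α = ∅ := fun C hC α hα =>
      not_nonempty_iff_eq_empty.1 fun h' => hα.not_ge ((cut_nonempty_iff hC α).1 h')
    refine ⟨hE, (dinf_le (lam := lam) hδ.le (fun α hα => ?_) (fun α hα => ?_)).trans_lt hδε,
      (dinf_le (lam := lam) hδ.le (fun α hα => ?_) (fun α hα => ?_)).trans_lt hδε⟩
    · refine ⟨(cut_nonempty_iff hE α).2 hα, (cut_nonempty_iff hA α).2 hα, ?_⟩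
      rw [hc]
      exact joinSet_left hδ.le hn ((cut_nonempty_iff hB α).2 hα)
    · exact ⟨emp _ hE α hα, emp _ hA α hα⟩
    · rw [cut_zadeh_iter hT hTs hF]
      refine ⟨((cut_nonempty_iff hE α).2 hα).image _, (cut_nonempty_iff hB α).2 hα, ?_⟩
      rw [hc]
      exact joinSet_right hδ.le hn ((cut_nonempty_iff hA α).2 hα)
    · rw [cut_zadeh_iter hT hTs hF, emp _ hE α hα, image_empty]
      exact ⟨rfl, emp _ hB α hα⟩
  obtain ⟨a, b, c⟩ := key A₁ hA₁ B₁ hB₁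
  obtain ⟨a', b', c'⟩ := key A₂ hA₂ B₂ hB₂
  exact ⟨n, _, a, _, a', b, b', c, c'⟩

/-- Indicator of a set. -/
noncomputable def indF (s : Set X) : X → ℝ := fun x => if x ∈ s then 1 else 0

lemma indF_mem [TopologicalSpace X] {s : Set X} (hs : IsClosed s) (hne : s.Nonempty) :
    indF s ∈ Feq X 1 := by
  have h01 : ∀ x, indF s x ∈ Set.Icc (0:ℝ) 1 := fun x => by
    unfold indF; split_ifs <;> simp
  refine ⟨⟨h01, usc_of_cut fun α => ?_⟩, ?_, fun x => (h01 x).2⟩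
  · rcases le_or_gt α 0 with h | h
    · convert isClosed_univ
      exact eq_univ_of_forall fun x => le_trans h (h01 x).1
    · rcases le_or_gt α 1 with h' | h'
      · convert hs
        ext x
        by_cases hx : x ∈ s <;> simp [cut, indF, hx, h, h']
      · convert isClosed_empty
        exact eq_empty_of_forall_notMem fun x hx => absurd (le_trans hx (h01 x).2) (not_le.2 h')
  · obtain ⟨x, hx⟩ := hne
    exact ⟨x, by simp [indF, hx]⟩

lemma cut_indF (s : Set X) : cut (indF s) 1 = s := by
  ext x
  by_cases hx : x ∈ s
  · simp [cut, indF, hx]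
  · simp [cut, indF, hx, zero_lt_one]

lemma four_one [MetricSpace X] [CompactSpace X] {T : X → X} (hT : Continuous T)
    (hTs : Function.Surjective T) (h : TransOn dinf (zadeh T) (Feq X 1)) : TopWeakMix T := by
  refine wm_of hT hTs fun x y₁ y₂ ε hε => ?_
  have h1 : (1:ℝ) ∈ Set.Ioc (0:ℝ) 1 := by simp
  obtain ⟨n, E, hE, d1, d2⟩ := h (indF {x}) (indF_mem isClosed_singleton (singleton_nonempty x))
    (indF {y₁, y₂}) (indF_mem (Set.toFinite _).isClosed (insert_nonempty _ _)) ε hε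
  have ne := (cut_nonempty_iff hE 1).2 le_rfl
  have e1 := (eHd_le_dinf _ _ h1).trans_lt d1
  have e2 := (eHd_le_dinf _ _ h1).trans_lt d2
  rw [cut_indF, eHd, if_pos (Or.inl ⟨ne, singleton_nonempty _⟩)] at e1
  rw [cut_indF, cut_zadeh_iter hT hTs hE.1, eHd,
    if_pos (Or.inl ⟨ne.image _, insert_nonempty _ _⟩)] at e2
  exact ⟨n, _, ne, e1, e2⟩

/-- Equivalence of: weak mixing of `(X,T)`; transitivity / weak mixing of `(K(X), T_K)`;
and transitivity / weak mixing of the Zadeh extension on each `𝔽^{=λ}(X)`. -/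
theorem weakMixing_tfae {X : Type*} [MetricSpace X] [CompactSpace X] [Nontrivial X]
    (T : X → X) (hT : Continuous T) (hTs : Function.Surjective T) :
    List.TFAE
      [TopWeakMix T,
       TopTrans (hyper T hT),
       TopWeakMix (hyper T hT),
       ∀ lam ∈ Set.Ioc (0:ℝ) 1, TransOn dinf (zadeh T) (Feq X lam),
       ∀ lam ∈ Set.Ioc (0:ℝ) 1, WeakMixOn dinf (zadeh T) (Feq X lam)] := by
  tfae_have 1 → 3 := one_three hT
  tfae_have 3 → 2 := wm_trans
  tfae_have 2 → 1 := two_one hT hTs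
  tfae_have 1 → 5 := fun h lam _ => one_five hT hTs h lam
  tfae_have 5 → 4 := by
    intro h lam hl A hA B hB ε hε
    obtain ⟨n, E, hE, _, _, h1, _, h2, _⟩ := h lam hl A hA A hA B hB B hB ε hε
    exact ⟨n, E, hE, h1, h2⟩
  tfae_have 4 → 1 := fun h => four_one hT hTs (h 1 (by simp))
  tfae_finish
end

section
/- Let (X, T) be a dynamical system. The following statements are equivalent: (1) (K(X), T_K) is Devaney chaotic; (2) for every λ ∈ (0,1], (𝔽^{=λ}(X), T_F|_{𝔽^{=λ}(X)}) is Devaney chaotic; (3) there exists λ ∈ (0,1] such that (𝔽^{=λ}(X), T_F|_{𝔽^{=λ}(X)}) is Devaney chaotic. -/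
open Metric Set TopologicalSpace Filter Function
open scoped Classical

variable {X Y : Type*}

/-- Devaney chaos on a topological space: transitivity plus dense periodic points. -/
def DevaneyTop [TopologicalSpace Y] (S : Y → Y) : Prop :=
  TopTrans S ∧ Dense {y : Y | ∃ n : ℕ, 1 ≤ n ∧ S^[n] y = y}

/-- Devaney chaos of `S` restricted to `C`, phrased via metric balls:
transitivity plus density of periodic points of the subsystem. -/
def DevaneyOn (ρ : Y → Y → ℝ) (S : Y → Y) (C : Set Y) : Prop :=
  TransOn ρ S C ∧
    ∀ A ∈ C, ∀ ε > 0, ∃ P ∈ C, (∃ n : ℕ, 1 ≤ n ∧ S^[n] P = P) ∧ ρ P A < ε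

section Helpers

theorem hp_isClosed_cut {X : Type*} [TopologicalSpace X] {A : X → ℝ} (hA : IsFuzzy A) (α : ℝ) :
    IsClosed (cut A α) :=
  (upperSemicontinuous_iff_isClosed_preimage.1 hA.2) α

theorem hp_zadeh_attained {X : Type*} [MetricSpace X] [CompactSpace X]
    {T : X → X} (hT : Continuous T) (hTs : Function.Surjective T) {A : X → ℝ} (hA : IsFuzzy A)
    (x : X) : ∃ y, T y = x ∧ zadeh T A x = A y ∧ ∀ z, T z = x → A z ≤ A y := by
  have hne : (T ⁻¹' {x}).Nonempty := by
    obtain ⟨y, hy⟩ := hTs x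
    exact ⟨y, hy⟩
  have hc : IsCompact (T ⁻¹' {x}) := (isClosed_singleton.preimage hT).isCompact
  obtain ⟨y, hy, hmax⟩ := UpperSemicontinuousOn.exists_isMaxOn hne hc
    (hA.2.upperSemicontinuousOn _)
  have hm : ∀ z, T z = x → A z ≤ A y := fun z hz => isMaxOn_iff.1 hmax z hz
  refine ⟨y, hy, ?_, hm⟩
  apply le_antisymm
  · apply csSup_le (hne.image A)
    rintro _ ⟨z, hz, rfl⟩
    exact hm z hz
  · apply le_csSup
    · refine ⟨A y, ?_⟩
      rintro _ ⟨z, hz, rfl⟩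
      exact hm z hz
    · exact ⟨y, hy, rfl⟩

theorem hp_cut_zadeh {X : Type*} [MetricSpace X] [CompactSpace X]
    {T : X → X} (hT : Continuous T) (hTs : Function.Surjective T) {A : X → ℝ} (hA : IsFuzzy A)
    (α : ℝ) : cut (zadeh T A) α = T '' cut A α := by
  ext x
  obtain ⟨y, hy, he, hm⟩ := hp_zadeh_attained hT hTs hA x
  constructor
  · intro h
    exact ⟨y, by simpa [cut, he] using h, hy⟩
  · rintro ⟨z, hz, hzx⟩
    show α ≤ zadeh T A x
    rw [he]
    exact le_trans hz (hm z hzx)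

theorem hp_zadeh_mem {X : Type*} [MetricSpace X] [CompactSpace X]
    {T : X → X} (hT : Continuous T) (hTs : Function.Surjective T) {lam : ℝ} {A : X → ℝ}
    (hA : A ∈ Feq X lam) : zadeh T A ∈ Feq X lam := by
  obtain ⟨hF, ⟨x0, hx0⟩, hle⟩ := hA
  have hle' : ∀ x, zadeh T A x ≤ lam := by
    intro x
    obtain ⟨y, hy, he, hm⟩ := hp_zadeh_attained hT hTs hF x
    rw [he]; exact hle y
  refine ⟨⟨?_, ?_⟩, ⟨T x0, ?_⟩, hle'⟩
  · intro x
    obtain ⟨y, hy, he, hm⟩ := hp_zadeh_attained hT hTs hF x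
    rw [he]; exact hF.1 y
  · rw [upperSemicontinuous_iff_isClosed_preimage]
    intro α
    have : zadeh T A ⁻¹' Ici α = T '' cut A α := hp_cut_zadeh hT hTs hF α
    rw [this]
    exact ((hp_isClosed_cut hF α).isCompact.image hT).isClosed
  · apply le_antisymm (hle' _)
    obtain ⟨y, hy, he, hm⟩ := hp_zadeh_attained hT hTs hF (T x0)
    rw [he, ← hx0]
    exact hm x0 rfl

theorem hp_iter {X : Type*} [MetricSpace X] [CompactSpace X]
    {T : X → X} (hT : Continuous T) (hTs : Function.Surjective T) {lam : ℝ} {A : X → ℝ}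
    (hA : A ∈ Feq X lam) (n : ℕ) : (zadeh T)^[n] A ∈ Feq X lam ∧
      ∀ α, cut ((zadeh T)^[n] A) α = T^[n] '' cut A α := by
  induction n with
  | zero => simpa using hA
  | succ k ih =>
    rw [Function.iterate_succ_apply']
    refine ⟨hp_zadeh_mem hT hTs ih.1, fun α => ?_⟩
    rw [hp_cut_zadeh hT hTs ih.1.1, ih.2, Function.iterate_succ', Set.image_comp]

theorem hp_ext {X : Type*} [TopologicalSpace X] {A B : X → ℝ} (hA : IsFuzzy A) (hB : IsFuzzy B)
    (h : ∀ α, 0 < α → cut A α = cut B α) : A = B := by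
  have key : ∀ A B : X → ℝ, IsFuzzy B → (∀ α, 0 < α → cut A α = cut B α) → ∀ x, A x ≤ B x := by
    intro A B hB h x
    by_contra! hlt
    have h0 : 0 < A x := lt_of_le_of_lt (hB.1 x).1 hlt
    have : x ∈ cut B (A x) := by
      rw [← h _ h0]; exact le_refl (A x)
    exact absurd this (not_le.2 hlt)
  funext x
  exact le_antisymm (key A B hB h x) (key B A hA (fun α h0 => (h α h0).symm) x)

theorem hp_cut_nonempty {X : Type*} [TopologicalSpace X] {lam : ℝ} {A : X → ℝ}
    (hA : A ∈ Feq X lam) {α : ℝ} (h : α ≤ lam) : (cut A α).Nonempty := by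
  obtain ⟨_, ⟨x, hx⟩, _⟩ := hA
  exact ⟨x, by simpa [cut, hx] using h⟩

theorem hp_dinf_le {X : Type*} [MetricSpace X] [CompactSpace X] {lam : ℝ}
    {A B : X → ℝ} (hA : A ∈ Feq X lam) (hB : B ∈ Feq X lam) {r : ℝ} (hr : 0 ≤ r)
    (h : ∀ α, 0 < α → α ≤ lam → (∀ x ∈ cut A α, ∃ y ∈ cut B α, dist x y ≤ r) ∧
      (∀ y ∈ cut B α, ∃ x ∈ cut A α, dist y x ≤ r)) : dinf A B ≤ r := by
  apply csSup_le
  · exact ⟨_, 1, by norm_num, rfl⟩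
  rintro _ ⟨α, hα, rfl⟩
  by_cases hl : α ≤ lam
  · rw [eHd, if_pos (Or.inl ⟨hp_cut_nonempty hA hl, hp_cut_nonempty hB hl⟩)]
    exact Metric.hausdorffDist_le_of_mem_dist hr (h α hα.1 hl).1 (h α hα.1 hl).2
  · have e : ∀ A ∈ Feq X lam, cut A α = ∅ := by
      intro A hA
      ext x
      simp only [cut, mem_setOf_eq, mem_empty_iff_false, iff_false, not_le]
      exact lt_of_le_of_lt (hA.2.2 x) (not_le.1 hl)
    rw [e A hA, e B hB, eHd, if_pos (Or.inr ⟨rfl, rfl⟩)]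
    simpa using hr

theorem hp_le_dinf {X : Type*} [MetricSpace X] [CompactSpace X] {lam : ℝ}
    (hlam : lam ∈ Set.Ioc (0:ℝ) 1)
    {A B : X → ℝ} (hA : A ∈ Feq X lam) (hB : B ∈ Feq X lam) :
    Metric.hausdorffDist (cut A lam) (cut B lam) ≤ dinf A B := by
  apply le_csSup
  · refine ⟨Metric.diam (Set.univ : Set X), ?_⟩
    rintro _ ⟨α, hα, rfl⟩
    rw [eHd]
    split_ifs with hc
    · rcases hc with ⟨h1, h2⟩ | ⟨h1, h2⟩
      · have hb : ∀ s : Set X, Bornology.IsBounded s := fun s => Bornology.IsBounded.all s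
        exact (Metric.hausdorffDist_le_diam h1 (hb _) h2 (hb _)).trans
          (Metric.diam_mono (subset_univ _) (hb _))
      · rw [h1, h2]; simpa using Metric.diam_nonneg
    · exact le_rfl
  · exact ⟨lam, hlam, by
      rw [eHd, if_pos (Or.inl ⟨hp_cut_nonempty hA le_rfl, hp_cut_nonempty hB le_rfl⟩)]⟩

theorem hp_family {X ι : Type*} [MetricSpace X] [CompactSpace X] {lam : ℝ}
    (hlam : lam ∈ Set.Ioc (0:ℝ) 1) (s : Finset ι)
    (C : ι → Set X) (hC : ∀ i ∈ s, IsClosed (C i)) (hCn : ∀ i ∈ s, (C i).Nonempty)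
    (a : ι → ℝ) (ha : ∀ i ∈ s, a i ∈ Set.Icc 0 lam) (hmax : ∃ i ∈ s, a i = lam) :
    ∃ F ∈ Feq X lam, ∀ α, 0 < α → cut F α = {x | ∃ i ∈ s, α ≤ a i ∧ x ∈ C i} := by
  obtain ⟨i0, hi0, hai0⟩ := hmax
  have hs : s.Nonempty := ⟨i0, hi0⟩
  let F : X → ℝ := fun x => s.sup' hs (fun i => if x ∈ C i then a i else 0)
  have hcut : ∀ α, 0 < α → cut F α = {x | ∃ i ∈ s, α ≤ a i ∧ x ∈ C i} := by
    intro α hα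
    ext x
    simp only [cut, mem_setOf_eq, F, Finset.le_sup'_iff]
    constructor
    · rintro ⟨i, hi, h⟩
      split_ifs at h with hx
      · exact ⟨i, hi, h, hx⟩
      · exact absurd h (not_le.2 hα)
    · rintro ⟨i, hi, h, hx⟩
      exact ⟨i, hi, by rwa [if_pos hx]⟩
  have h0 : ∀ x, 0 ≤ F x := by
    intro x
    simp only [F, Finset.le_sup'_iff]
    refine ⟨i0, hi0, ?_⟩
    split_ifs
    · exact (ha i0 hi0).1
    · exact le_rfl
  have hle : ∀ x, F x ≤ lam := by
    intro x
    simp only [F, Finset.sup'_le_iff]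
    intro i hi
    split_ifs
    · exact (ha i hi).2
    · exact hlam.1.le
  refine ⟨F, ⟨⟨fun x => ⟨h0 x, (hle x).trans hlam.2⟩, ?_⟩, ?_, hle⟩, hcut⟩
  · rw [upperSemicontinuous_iff_isClosed_preimage]
    intro α
    rcases le_or_gt α 0 with hα | hα
    · have : F ⁻¹' Ici α = univ := by
        ext x; simpa using hα.trans (h0 x)
      rw [this]; exact isClosed_univ
    · have e : F ⁻¹' Ici α = ⋃ i ∈ s.filter (fun i => α ≤ a i), C i := by
        have := hcut α hα
        change F ⁻¹' Ici α = _ at this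
        rw [this]
        ext x
        simp [and_assoc]
      rw [e]
      exact isClosed_biUnion_finset (fun i hi => hC i (Finset.mem_filter.1 hi).1)
  · obtain ⟨x, hx⟩ := hCn i0 hi0
    refine ⟨x, le_antisymm (hle x) ?_⟩
    have : x ∈ cut F lam := by
      rw [hcut lam hlam.1]
      exact ⟨i0, hi0, hai0.ge, hx⟩
    exact this

theorem hp_approx {X : Type*} [MetricSpace X] [CompactSpace X] {lam : ℝ}
    {A : X → ℝ} (hA : A ∈ Feq X lam) {δ : ℝ} (hδ : 0 < δ) :
    ∃ (t : Finset X) (a : X → ℝ), (∀ x ∈ t, a x ∈ Set.Icc 0 lam) ∧ (∃ x ∈ t, a x = lam) ∧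
      ∀ α, (∀ y ∈ cut A α, ∃ x ∈ t, α ≤ a x ∧ dist y x ≤ δ) ∧
        (∀ x ∈ t, α ≤ a x → ∃ y ∈ cut A α, dist y x ≤ δ) := by
  obtain ⟨t, -, htf, hcov⟩ := finite_cover_balls_of_compact (isCompact_univ (X := X)) hδ
  have hex : ∀ x : X, ∃ m, dist m x ≤ δ ∧ ∀ z, dist z x ≤ δ → A z ≤ A m := by
    intro x
    obtain ⟨m, hm, hmm⟩ := UpperSemicontinuousOn.exists_isMaxOn
      (s := closedBall x δ) ⟨x, mem_closedBall_self hδ.le⟩ isClosed_closedBall.isCompact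
      (hA.1.2.upperSemicontinuousOn _)
    exact ⟨m, hm, fun z hz => isMaxOn_iff.1 hmm z hz⟩
  choose m hm hmm using hex
  have hc : ∀ y : X, ∃ x ∈ t, dist y x ≤ δ := by
    intro y
    have := hcov (mem_univ y)
    simp only [mem_iUnion, mem_ball, exists_prop] at this
    obtain ⟨x, hx, h⟩ := this
    exact ⟨x, hx, h.le⟩
  refine ⟨htf.toFinset, fun x => A (m x), ?_, ?_, ?_⟩
  · intro x _
    exact ⟨(hA.1.1 _).1, hA.2.2 _⟩
  · obtain ⟨y, hy⟩ := hA.2.1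
    obtain ⟨x, hx, hd⟩ := hc y
    refine ⟨x, by simpa using hx, le_antisymm (hA.2.2 _) ?_⟩
    rw [← hy]; exact hmm x y hd
  · intro α
    refine ⟨?_, ?_⟩
    · intro y hy
      obtain ⟨x, hx, hd⟩ := hc y
      exact ⟨x, by simpa using hx, le_trans hy (hmm x y hd), hd⟩
    · intro x _ h
      exact ⟨m x, h, hm x⟩

theorem hp_coe_iter {X : Type*} [MetricSpace X] {T : X → X} (hT : Continuous T)
    (K : NonemptyCompacts X) (n : ℕ) :
    (((hyper T hT)^[n] K : NonemptyCompacts X) : Set X) = T^[n] '' (K : Set X) := by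
  induction n with
  | zero => simp
  | succ k ih =>
    rw [Function.iterate_succ_apply', Function.iterate_succ', Set.image_comp, ← ih]
    rfl

theorem hp_hd_exists {X : Type*} [MetricSpace X] [CompactSpace X] {s t : Set X}
    (hs : s.Nonempty) (ht : t.Nonempty) {r : ℝ} (h : Metric.hausdorffDist s t < r) :
    (∀ x ∈ s, ∃ y ∈ t, dist x y < r) ∧ (∀ y ∈ t, ∃ x ∈ s, dist x y < r) := by
  have hb : ∀ s : Set X, Bornology.IsBounded s := fun s => Bornology.IsBounded.all s
  have fin := Metric.hausdorffEDist_ne_top_of_nonempty_of_bounded hs ht (hb _) (hb _)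
  exact ⟨fun x hx => Metric.exists_dist_lt_of_hausdorffDist_lt hx h fin,
    fun y hy => Metric.exists_dist_lt_of_hausdorffDist_lt' hy h fin⟩

def hpHit {X : Type*} (T : X → X) (n : ℕ) (U V : Set X) : Prop := ∃ x ∈ U, T^[n] x ∈ V

theorem hp_star {X : Type*} [MetricSpace X] [CompactSpace X]
    {T : X → X} (hT : Continuous T) (h : TopTrans (hyper T hT))
    {U V₁ V₂ : Set X} (hU : IsOpen U) (hV₁ : IsOpen V₁) (hV₂ : IsOpen V₂)
    (nU : U.Nonempty) (nV₁ : V₁.Nonempty) (nV₂ : V₂.Nonempty) :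
    ∃ n, hpHit T n U V₁ ∧ hpHit T n U V₂ := by
  obtain ⟨u, hu⟩ := nU
  obtain ⟨v, hv⟩ := nV₁
  obtain ⟨w, hw⟩ := nV₂
  obtain ⟨e, he, heU⟩ := Metric.isOpen_iff.1 hU u hu
  obtain ⟨f, hf, hfV⟩ := Metric.isOpen_iff.1 hV₁ v hv
  obtain ⟨g, hg, hgV⟩ := Metric.isOpen_iff.1 hV₂ w hw
  let Ku : NonemptyCompacts X := ⟨⟨{u}, isCompact_singleton⟩, singleton_nonempty u⟩
  let Kv : NonemptyCompacts X := ⟨⟨{v, w}, (Set.toFinite _).isCompact⟩, ⟨v, by simp⟩⟩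
  obtain ⟨n, L, ⟨K, hK, rfl⟩, hL⟩ := h (ball Ku e) (ball Kv (min f g)) isOpen_ball isOpen_ball
    ⟨Ku, mem_ball_self he⟩ ⟨Kv, mem_ball_self (lt_min hf hg)⟩
  rw [mem_ball, NonemptyCompacts.dist_eq] at hK hL
  have h1 := (hp_hd_exists K.nonempty Ku.nonempty hK).1
  have h2 := (hp_hd_exists (NonemptyCompacts.nonempty _) Kv.nonempty hL).2
  rw [hp_coe_iter] at h2
  have hKU : ∀ x ∈ (K : Set X), x ∈ U := by
    intro x hx
    obtain ⟨y, hy, hd⟩ := h1 x hx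
    have : y = u := hy
    subst this
    exact heU hd
  refine ⟨n, ?_, ?_⟩
  · obtain ⟨_, ⟨x, hx, rfl⟩, hd⟩ := h2 v (Or.inl rfl)
    exact ⟨x, hKU x hx, hfV (lt_of_lt_of_le hd (min_le_left _ _))⟩
  · obtain ⟨_, ⟨x, hx, rfl⟩, hd⟩ := h2 w (Or.inr rfl)
    exact ⟨x, hKU x hx, hgV (lt_of_lt_of_le hd (min_le_right _ _))⟩

theorem hp_weakmix {X : Type*} [MetricSpace X] [CompactSpace X]
    {T : X → X} (hT : Continuous T) (hTs : Function.Surjective T) (h : TopTrans (hyper T hT))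
    {A B C D : Set X} (hA : IsOpen A) (hB : IsOpen B) (hC : IsOpen C) (hD : IsOpen D)
    (nA : A.Nonempty) (nB : B.Nonempty) (nC : C.Nonempty) (nD : D.Nonempty) :
    ∃ n, hpHit T n A B ∧ hpHit T n C D := by
  obtain ⟨p, ⟨x, hxA, hxC⟩, -⟩ := hp_star hT h hA hC hC nA nC nC
  obtain ⟨d, hd⟩ := nD
  obtain ⟨d', hd'⟩ := (hTs.iterate p) d
  have hc := hT.iterate p
  obtain ⟨n, ⟨y, hy, hy'⟩, ⟨z, hz, hz'⟩⟩ := hp_star hT h (hA.inter (hC.preimage hc)) hB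
    (hD.preimage hc) ⟨x, hxA, hxC⟩ nB ⟨d', by simpa [hd'] using hd⟩
  refine ⟨n, ⟨y, hy.1, hy'⟩, ⟨T^[p] z, hz.2, ?_⟩⟩
  have : T^[p] (T^[n] z) ∈ D := hz'
  rwa [← Function.iterate_add_apply, add_comm, Function.iterate_add_apply] at this

theorem hp_multi {X : Type*} [MetricSpace X] [CompactSpace X] [Nonempty X]
    {T : X → X} (hT : Continuous T) (hTs : Function.Surjective T) (h : TopTrans (hyper T hT))
    {δ : ℝ} (hδ : 0 < δ) (s : Finset (X × X)) :
    ∃ n, ∀ p ∈ s, hpHit T n (ball p.1 δ) (ball p.2 δ) := by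
  suffices H : ∃ U V : Set X, IsOpen U ∧ IsOpen V ∧ U.Nonempty ∧ V.Nonempty ∧
      ∀ n, hpHit T n U V → ∀ p ∈ s, hpHit T n (ball p.1 δ) (ball p.2 δ) by
    obtain ⟨U, V, hU, hV, nU, nV, hh⟩ := H
    obtain ⟨n, hn, -⟩ := hp_star hT h hU hV hV nU nV nV
    exact ⟨n, hh n hn⟩
  induction s using Finset.induction_on with
  | empty => exact ⟨univ, univ, isOpen_univ, isOpen_univ, univ_nonempty, univ_nonempty, by simp⟩
  | insert q s hq ih =>
    obtain ⟨U, V, hU, hV, nU, nV, hh⟩ := ih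
    obtain ⟨n, ⟨x, hx, hx'⟩, ⟨y, hy, hy'⟩⟩ := hp_weakmix hT hTs h hU
      (isOpen_ball (x := q.1) (ε := δ)) hV (isOpen_ball (x := q.2) (ε := δ)) nU
      ⟨_, mem_ball_self hδ⟩ nV ⟨_, mem_ball_self hδ⟩
    have hc := hT.iterate n
    refine ⟨U ∩ T^[n] ⁻¹' ball q.1 δ, V ∩ T^[n] ⁻¹' ball q.2 δ,
      hU.inter (isOpen_ball.preimage hc), hV.inter (isOpen_ball.preimage hc),
      ⟨x, hx, hx'⟩, ⟨y, hy, hy'⟩, ?_⟩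
    rintro m ⟨z, ⟨hzU, hzn⟩, ⟨hzV, hzm⟩⟩ p hp
    rcases Finset.mem_insert.1 hp with rfl | hp
    · refine ⟨T^[n] z, hzn, ?_⟩
      have : T^[n] (T^[m] z) ∈ ball p.2 δ := hzm
      rwa [← Function.iterate_add_apply, add_comm, Function.iterate_add_apply] at this
    · exact hh m ⟨z, hzU, hzV⟩ p hp

theorem hp_trans {X : Type*} [MetricSpace X] [CompactSpace X] [Nonempty X]
    {T : X → X} (hT : Continuous T) (hTs : Function.Surjective T) (h : TopTrans (hyper T hT))
    {lam : ℝ} (hlam : lam ∈ Set.Ioc (0:ℝ) 1) : TransOn dinf (zadeh T) (Feq X lam) := by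
  intro A hA B hB ε hε
  have hδ : 0 < ε / 3 := by linarith
  generalize hδe : ε / 3 = δ at hδ
  obtain ⟨t, a, ha, ⟨x0, hx0, hax0⟩, hA'⟩ := hp_approx hA hδ
  obtain ⟨s, b, hb, ⟨y0, hy0, hby0⟩, hB'⟩ := hp_approx hB hδ
  obtain ⟨n, hn⟩ := hp_multi hT hTs h hδ (t ×ˢ s)
  choose! z hz1 hz2 using hn
  obtain ⟨E, hE, hcut⟩ := hp_family hlam (t ×ˢ s) (fun p => {z p}) (fun _ _ => isClosed_singleton)
    (fun _ _ => singleton_nonempty _) (fun p => min (a p.1) (b p.2))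
    (by
      intro p hp
      rw [Finset.mem_product] at hp
      exact ⟨le_min (ha _ hp.1).1 (hb _ hp.2).1, (min_le_left _ _).trans (ha _ hp.1).2⟩)
    ⟨(x0, y0), Finset.mem_product.2 ⟨hx0, hy0⟩, by simp [hax0, hby0]⟩
  have hit := hp_iter hT hTs hE n
  refine ⟨n, E, hE, lt_of_le_of_lt (hp_dinf_le (r := 2 * δ) hE hA (by linarith) ?_) (by linarith),
    lt_of_le_of_lt (hp_dinf_le (r := 2 * δ) hit.1 hB (by linarith) ?_) (by linarith)⟩
  · intro α hα hαl
    rw [hcut α hα]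
    constructor
    · rintro _ ⟨p, hp, hpa, rfl⟩
      obtain ⟨y, hy, hd⟩ := (hA' α).2 p.1 (Finset.mem_product.1 hp).1
        (hpa.trans (min_le_left _ _))
      refine ⟨y, hy, ?_⟩
      have := hz1 p hp
      rw [mem_ball] at this
      have := dist_triangle_right (z p) y p.1
      linarith
    · intro y hy
      obtain ⟨x, hx, hxa, hd⟩ := (hA' α).1 y hy
      have hp : (x, y0) ∈ t ×ˢ s := Finset.mem_product.2 ⟨hx, hy0⟩
      refine ⟨z (x, y0), ⟨_, hp, le_min hxa (hby0 ▸ hαl), rfl⟩, ?_⟩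
      have := hz1 _ hp
      rw [mem_ball] at this
      have := dist_triangle_right y (z (x, y0)) x
      linarith
  · intro α hα hαl
    rw [hit.2, hcut α hα]
    constructor
    · rintro _ ⟨_, ⟨p, hp, hpa, rfl⟩, rfl⟩
      obtain ⟨y, hy, hd⟩ := (hB' α).2 p.2 (Finset.mem_product.1 hp).2
        (hpa.trans (min_le_right _ _))
      refine ⟨y, hy, ?_⟩
      have := hz2 p hp
      rw [mem_ball] at this
      have := dist_triangle_right (T^[n] (z p)) y p.2
      linarith
    · intro y hy
      obtain ⟨x, hx, hxa, hd⟩ := (hB' α).1 y hy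
      have hp : (x0, x) ∈ t ×ˢ s := Finset.mem_product.2 ⟨hx0, hx⟩
      refine ⟨T^[n] (z (x0, x)), ⟨_, ⟨_, hp, le_min (hax0 ▸ hαl) hxa, rfl⟩, rfl⟩, ?_⟩
      have := hz2 _ hp
      rw [mem_ball] at this
      have := dist_triangle_right y (T^[n] (z (x0, x))) x
      linarith

theorem hp_image_mul {X : Type*} {T : X → X} {P : Set X} {n : ℕ} (h : T^[n] '' P = P) (k : ℕ) :
    T^[n * k] '' P = P := by
  induction k with
  | zero => simp
  | succ k ih => rw [Nat.mul_succ, Function.iterate_add, Set.image_comp, h, ih]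

theorem hp_periodic {X : Type*} [MetricSpace X] [CompactSpace X]
    {T : X → X} (hT : Continuous T) (hTs : Function.Surjective T)
    (h : Dense {y : NonemptyCompacts X | ∃ n : ℕ, 1 ≤ n ∧ (hyper T hT)^[n] y = y})
    {lam : ℝ} (hlam : lam ∈ Set.Ioc (0:ℝ) 1) :
    ∀ A ∈ Feq X lam, ∀ ε > 0, ∃ P ∈ Feq X lam,
      (∃ n : ℕ, 1 ≤ n ∧ (zadeh T)^[n] P = P) ∧ dinf P A < ε := by
  intro A hA ε hε
  have hδ : 0 < ε / 3 := by linarith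
  generalize hδe : ε / 3 = δ at hδ
  obtain ⟨t, a, ha, hmax, hA'⟩ := hp_approx hA hδ
  have hP : ∀ x : X, ∃ (P : Set X) (n : ℕ), IsClosed P ∧ P.Nonempty ∧ 1 ≤ n ∧ T^[n] '' P = P ∧
      ∀ y ∈ P, dist y x < δ := by
    intro x
    let K : NonemptyCompacts X := ⟨⟨{x}, isCompact_singleton⟩, singleton_nonempty x⟩
    obtain ⟨L, ⟨n, hn, hL⟩, hd⟩ := h.exists_dist_lt K hδ
    rw [dist_comm, NonemptyCompacts.dist_eq] at hd
    refine ⟨L, n, L.isCompact.isClosed, L.nonempty, hn, ?_, ?_⟩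
    · rw [← hp_coe_iter hT, hL]
    · intro y hy
      obtain ⟨w, hw, hd⟩ := (hp_hd_exists L.nonempty K.nonempty hd).1 y hy
      have : w = x := hw
      rwa [this] at hd
  choose P N hPc hPn hN hPi hPd using hP
  obtain ⟨F, hF, hcut⟩ := hp_family hlam t P (fun x _ => hPc x) (fun x _ => hPn x) a ha hmax
  refine ⟨F, hF, ⟨∏ x ∈ t, N x, Nat.one_le_iff_ne_zero.2 (Finset.prod_ne_zero_iff.2
    fun x _ => Nat.one_le_iff_ne_zero.1 (hN x)), ?_⟩,
    lt_of_le_of_lt (hp_dinf_le (r := 2 * δ) hF hA (by linarith) ?_) (by linarith)⟩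
  · have hit := hp_iter hT hTs hF (∏ x ∈ t, N x)
    apply hp_ext hit.1.1 hF.1
    intro α hα
    have hI : ∀ x ∈ t, T^[∏ x ∈ t, N x] '' P x = P x := by
      intro x hx
      obtain ⟨k, hk⟩ := Finset.dvd_prod_of_mem N hx
      rw [hk]
      exact hp_image_mul (hPi x) k
    rw [hit.2, hcut α hα]
    ext y
    constructor
    · rintro ⟨w, ⟨x, hx, hxa, hw⟩, rfl⟩
      refine ⟨x, hx, hxa, ?_⟩
      rw [← hI x hx]
      exact ⟨w, hw, rfl⟩
    · rintro ⟨x, hx, hxa, hy⟩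
      rw [← hI x hx] at hy
      obtain ⟨w, hw, rfl⟩ := hy
      exact ⟨w, ⟨x, hx, hxa, hw⟩, rfl⟩
  · intro α hα hαl
    rw [hcut α hα]
    constructor
    · rintro w ⟨x, hx, hxa, hw⟩
      obtain ⟨y, hy, hd⟩ := (hA' α).2 x hx hxa
      refine ⟨y, hy, ?_⟩
      have := hPd x w hw
      have := dist_triangle_right w y x
      linarith
    · intro y hy
      obtain ⟨x, hx, hxa, hd⟩ := (hA' α).1 y hy
      obtain ⟨w, hw⟩ := hPn x
      refine ⟨w, ⟨x, hx, hxa, hw⟩, ?_⟩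
      have := hPd x w hw
      have := dist_triangle_right y w x
      linarith

theorem hp_char {X : Type*} [MetricSpace X] [CompactSpace X] {lam : ℝ}
    (hlam : lam ∈ Set.Ioc (0:ℝ) 1) (K : NonemptyCompacts X) :
    ∃ F ∈ Feq X lam, cut F lam = (K : Set X) := by
  obtain ⟨F, hF, hcut⟩ := hp_family hlam (Finset.univ : Finset Unit) (fun _ => (K : Set X))
    (fun _ _ => K.isCompact.isClosed) (fun _ _ => K.nonempty) (fun _ => lam)
    (fun _ _ => ⟨hlam.1.le, le_rfl⟩) ⟨(), by simp, rfl⟩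
  refine ⟨F, hF, ?_⟩
  rw [hcut lam hlam.1]
  ext x; simp

theorem hp_back {X : Type*} [MetricSpace X] [CompactSpace X]
    {T : X → X} (hT : Continuous T) (hTs : Function.Surjective T)
    {lam : ℝ} (hlam : lam ∈ Set.Ioc (0:ℝ) 1) (h : DevaneyOn dinf (zadeh T) (Feq X lam)) :
    DevaneyTop (hyper T hT) := by
  have top : ∀ F ∈ Feq X lam, ∃ K : NonemptyCompacts X, (K : Set X) = cut F lam := fun F hF =>
    ⟨⟨⟨cut F lam, (hp_isClosed_cut hF.1 lam).isCompact⟩, hp_cut_nonempty hF le_rfl⟩, rfl⟩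
  constructor
  · rintro U V hU hV ⟨A, hA⟩ ⟨B, hB⟩
    obtain ⟨e, he, heU⟩ := Metric.isOpen_iff.1 hU A hA
    obtain ⟨f, hf, hfV⟩ := Metric.isOpen_iff.1 hV B hB
    obtain ⟨FA, hFA, hcA⟩ := hp_char hlam A
    obtain ⟨FB, hFB, hcB⟩ := hp_char hlam B
    obtain ⟨n, E, hE, h1, h2⟩ := h.1 FA hFA FB hFB (min e f) (lt_min he hf)
    obtain ⟨K, hK⟩ := top E hE
    have hit := hp_iter hT hTs hE n
    refine ⟨n, (hyper T hT)^[n] K, ⟨K, heU ?_, rfl⟩, hfV ?_⟩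
    · rw [mem_ball, NonemptyCompacts.dist_eq, hK, ← hcA]
      exact lt_of_le_of_lt (hp_le_dinf hlam hE hFA) (lt_of_lt_of_le h1 (min_le_left _ _))
    · rw [mem_ball, NonemptyCompacts.dist_eq, hp_coe_iter, hK, ← hcB, ← hit.2]
      exact lt_of_le_of_lt (hp_le_dinf hlam hit.1 hFB) (lt_of_lt_of_le h2 (min_le_right _ _))
  · rw [Metric.dense_iff]
    intro A r hr
    obtain ⟨FA, hFA, hcA⟩ := hp_char hlam A
    obtain ⟨P, hP, ⟨n, hn, hPn⟩, hd⟩ := h.2 FA hFA r hr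
    obtain ⟨K, hK⟩ := top P hP
    have hit := hp_iter hT hTs hP n
    refine ⟨K, ?_, n, hn, ?_⟩
    · rw [mem_ball, NonemptyCompacts.dist_eq, hK, ← hcA]
      exact lt_of_le_of_lt (hp_le_dinf hlam hP hFA) hd
    · apply SetLike.coe_injective
      rw [hp_coe_iter, hK, ← hit.2, hPn]

end Helpers

/-- Devaney chaos of `(K(X), T_K)` is equivalent to Devaney chaos of the Zadeh extension
on every (equivalently, some) `𝔽^{=λ}(X)`. -/
theorem devaney_tfae {X : Type*} [MetricSpace X] [CompactSpace X] [Nontrivial X]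
    (T : X → X) (hT : Continuous T) (hTs : Function.Surjective T) :
    List.TFAE
      [DevaneyTop (hyper T hT),
       ∀ lam ∈ Set.Ioc (0:ℝ) 1, DevaneyOn dinf (zadeh T) (Feq X lam),
       ∃ lam ∈ Set.Ioc (0:ℝ) 1, DevaneyOn dinf (zadeh T) (Feq X lam)] := by
  tfae_have 1 → 2 := fun h lam hlam =>
    ⟨hp_trans hT hTs h.1 hlam, hp_periodic hT hTs h.2 hlam⟩
  tfae_have 2 → 3 := fun h => ⟨1, by norm_num, h 1 (by norm_num)⟩
  tfae_have 3 → 1 := fun ⟨_, hlam, h⟩ => hp_back hT hTs hlam h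
  tfae_finish
end

section
/- Let (X, T) be a dynamical system and λ ∈ (0,1]. If the Zadeh extension system (𝔽^{=λ}(X), T_F|_{𝔽^{=λ}(X)}) with the levelwise metric d_∞ is mildly mixing, then (X, T) is mildly mixing. -/
open Metric Set TopologicalSpace Filter Function
open scoped Classical

variable {X Y : Type*}

/-- Mild mixing on a topological space: `S` is weakly disjoint with every transitive
dynamical system (a compact metric space with at least two points together with a
continuous surjection). -/
def MildMixTop [TopologicalSpace Y] (S : Y → Y) : Prop :=
  ∀ (Z : Type) [MetricSpace Z] [CompactSpace Z] [Nontrivial Z] (R : Z → Z),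
    Continuous R → Function.Surjective R → TopTrans R →
      TopTrans (fun p : Y × Z => (S p.1, R p.2))

/-- Mild mixing of `S` restricted to `C` (with the metric `ρ`): the product of the
subsystem with every transitive dynamical system is transitive, phrased via balls. -/
def MildMixOn (ρ : Y → Y → ℝ) (S : Y → Y) (C : Set Y) : Prop :=
  ∀ (Z : Type) [MetricSpace Z] [CompactSpace Z] [Nontrivial Z] (R : Z → Z),
    Continuous R → Function.Surjective R → TopTrans R →
      ∀ A ∈ C, ∀ B ∈ C, ∀ z₁ z₂ : Z, ∀ ε > 0, ∃ n : ℕ, ∃ E ∈ C, ∃ w : Z,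
        ρ E A < ε ∧ dist w z₁ < ε ∧ ρ (S^[n] E) B < ε ∧ dist (R^[n] w) z₂ < ε

lemma aux_eHd_le {X : Type*} [MetricSpace X] [CompactSpace X] (A B : Set X) :
    eHd X A B ≤ Metric.diam (Set.univ : Set X) := by
  have hb : Bornology.IsBounded (Set.univ : Set X) := isCompact_univ.isBounded
  unfold eHd
  split_ifs with h
  · rcases h with ⟨h1, h2⟩ | ⟨h1, h2⟩
    · exact (Metric.hausdorffDist_le_diam h1 (hb.subset (subset_univ _)) h2
        (hb.subset (subset_univ _))).trans (Metric.diam_mono (subset_univ _) hb)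
    · subst h1; subst h2
      simp [Metric.diam_nonneg]
  · exact le_rfl

lemma aux_dist_lt {X : Type*} [MetricSpace X] [CompactSpace X] {lam : ℝ}
    (hlam : lam ∈ Set.Ioc (0:ℝ) 1) {E : X → ℝ} {x e : X} {ε : ℝ} (he : lam ≤ E e)
    (h : dinf E (fun y => if y = x then lam else 0) < ε) : dist e x < ε := by
  have hb : Bornology.IsBounded (Set.univ : Set X) := isCompact_univ.isBounded
  have hc : cut (fun y => if y = x then lam else 0) lam = {x} := by
    ext y
    by_cases hy : y = x <;> simp [cut, hy, hlam.1]
  have h1 : eHd X (cut E lam) {x} < ε := by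
    refine lt_of_le_of_lt ?_ h
    unfold dinf
    refine le_csSup ?_ ⟨lam, hlam, by rw [hc]⟩
    refine ⟨Metric.diam (Set.univ : Set X), ?_⟩
    rintro r ⟨α, -, rfl⟩
    exact aux_eHd_le _ _
  have hne : (cut E lam).Nonempty := ⟨e, he⟩
  unfold eHd at h1
  rw [if_pos (Or.inl ⟨hne, singleton_nonempty x⟩)] at h1
  obtain ⟨y, hy, hd⟩ := Metric.exists_dist_lt_of_hausdorffDist_lt (x := e) he h1
    (Metric.hausdorffEDist_ne_top_of_nonempty_of_bounded hne (singleton_nonempty x)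
      (hb.subset (subset_univ _)) (hb.subset (subset_univ _)))
  rw [mem_singleton_iff] at hy
  rwa [hy] at hd

lemma aux_iter_s7 {X : Type*} {T : X → X} {lam : ℝ} (hl : 0 ≤ lam) {E : X → ℝ}
    (hE : ∀ x, E x ≤ lam) {e : X} (he : lam ≤ E e) (n : ℕ) :
    (∀ x, (zadeh T)^[n] E x ≤ lam) ∧ lam ≤ (zadeh T)^[n] E (T^[n] e) := by
  induction n with
  | zero => exact ⟨hE, he⟩
  | succ n ih =>
    simp only [Function.iterate_succ_apply']
    obtain ⟨h1, h2⟩ := ih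
    constructor
    · intro x
      refine Real.sSup_le ?_ hl
      rintro _ ⟨y, -, rfl⟩
      exact h1 y
    · refine h2.trans (le_csSup ⟨lam, ?_⟩ ⟨_, rfl, rfl⟩)
      rintro _ ⟨y, -, rfl⟩
      exact h1 y

lemma aux_mem_s7 {X : Type*} [MetricSpace X] {lam : ℝ}
    (hlam : lam ∈ Set.Ioc (0:ℝ) 1) (x : X) :
    (fun y => if y = x then lam else 0) ∈ Feq X lam := by
  refine ⟨⟨?_, ?_⟩, ⟨x, by simp⟩, ?_⟩
  · intro y
    by_cases hy : y = x <;> simp [hy, hlam.1.le, hlam.2]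
  · intro y c hc
    by_cases hy : y = x
    · simp only [hy, if_true] at hc
      refine Eventually.of_forall fun z => ?_
      by_cases hz : z = x
      · simpa [hz] using hc
      · simpa [hz] using hlam.1.trans hc
    · simp only [hy, if_false] at hc
      filter_upwards [isOpen_ne.mem_nhds hy] with z hz
      simpa [show z ≠ x from hz] using hc
  · intro y
    by_cases hy : y = x <;> simp [hy, hlam.1.le]

lemma aux_prod_iter {X Z : Type*} (T : X → X) (R : Z → Z) (n : ℕ) (p : X × Z) :
    (fun p : X × Z => (T p.1, R p.2))^[n] p = (T^[n] p.1, R^[n] p.2) := by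
  induction n with
  | zero => rfl
  | succ n ih => simp only [Function.iterate_succ_apply', ih]

/-- If the Zadeh extension restricted to `𝔽^{=λ}(X)` is mildly mixing, then `(X,T)`
is mildly mixing. -/
theorem mildMixing_of_zadeh_mildMixing {X : Type*} [MetricSpace X] [CompactSpace X] [Nontrivial X]
    (T : X → X) (hT : Continuous T) (hTs : Function.Surjective T)
    (lam : ℝ) (hlam : lam ∈ Set.Ioc (0:ℝ) 1)
    (hmm : MildMixOn dinf (zadeh T) (Feq X lam)) :
    MildMixTop T := by
  intro Z _ _ _ R hR hRs hRt U V hU hV ⟨⟨x₁, z₁⟩, h1⟩ ⟨⟨x₂, z₂⟩, h2⟩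
  obtain ⟨ε₁, hε₁, hb₁⟩ := Metric.isOpen_iff.1 hU _ h1
  obtain ⟨ε₂, hε₂, hb₂⟩ := Metric.isOpen_iff.1 hV _ h2
  obtain ⟨n, E, hE, w, hA, hw, hB, hRw⟩ := hmm Z R hR hRs hRt _ (aux_mem_s7 hlam x₁) _
    (aux_mem_s7 hlam x₂) z₁ z₂ (min ε₁ ε₂) (lt_min hε₁ hε₂)
  obtain ⟨-, ⟨e, he⟩, hle⟩ := hE
  have d1 := aux_dist_lt hlam he.ge hA
  have d2 := aux_dist_lt hlam (aux_iter_s7 hlam.1.le hle he.ge n).2 hB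
  refine ⟨n, (T^[n] e, R^[n] w), ⟨(e, w), hb₁ ?_, aux_prod_iter T R n _⟩, hb₂ ?_⟩
  · rw [Metric.mem_ball, Prod.dist_eq]
    exact (max_lt d1 hw).trans_le (min_le_left _ _)
  · rw [Metric.mem_ball, Prod.dist_eq]
    exact (max_lt d2 hRw).trans_le (min_le_right _ _)
end
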